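/- arXiv:1405.6650 — 6 statements merged into one kernel-verified Lean document; each statement's English description precedes it below -/
import Mathlib

section
/- Let A = [a_{ij}] be an N×N real matrix with strictly positive entries, viewed as the linear map x ↦ Ax on the open positive orthant of ℝ^N, and let Δ(A) := max over all indices i,j,k,ℓ of log((a_{ij} a_{kℓ})/(a_{iℓ} a_{kj})). Then for all vectors x, y with strictly positive entries, d_H(Ax, Ay) ≤ tanh(Δ(A)/4) · d_H(x, y); in particular, since Δ(A) < ∞, the map is a strict contraction in the Hilbert projective metric with contraction ratio tanh(Δ(A)/4) < 1. -/
/-!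
Write `x j = y j * exp (s j)`. For two rows `p`, `q` of the matrix, the logarithm of
`(p ⬝ x / p ⬝ y) / (q ⬝ x / q ⬝ y)` is the increment over `t ∈ [0, 1]` of
`log ∑ p j y j exp (t s j) - log ∑ q j y j exp (t s j)`, whose derivative is the difference of the
averages of `s` under two probability vectors. Multiplying both weights by a common positive factor
preserves cross-ratios, so those of the two vectors stay at most `exp Δ`. This forces their total
variation distance to be at most `tanh (Δ / 4)`, while the oscillation of `s` is the Hilbert
distance from `x` to `y`.
-/

/-- The Hilbert projective metric on vectors in `ℝ^N` with strictly positive entries: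
`d_H(x,y) = log((max_i x_i/y_i)/(min_i x_i/y_i))`. -/
noncomputable def dH {N : ℕ} (x y : Fin N → ℝ) : ℝ :=
  Real.log ((⨆ i, x i / y i) / (⨅ i, x i / y i))

/-- The projective diameter of an `N×N` matrix with strictly positive entries:
`Δ(A) = max_{i,j,k,ℓ} log((a_{ij} a_{kℓ})/(a_{iℓ} a_{kj}))`. -/
noncomputable def projDiam {N : ℕ} (A : Matrix (Fin N) (Fin N) ℝ) : ℝ :=
  ⨆ i, ⨆ j, ⨆ k, ⨆ l, Real.log ((A i j * A k l) / (A i l * A k j))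

/-- The Hilbert projective metric on strictly positive vectors over an arbitrary index type, so that
the source and target of a rectangular matrix can have different index types; `dH` is the case
`ι = Fin N`. -/
noncomputable def hilbertDist {ι : Type*} (x y : ι → ℝ) : ℝ :=
  Real.log ((⨆ i, x i / y i) / (⨅ i, x i / y i))

/-- The projective diameter `Δ(A)` of a rectangular matrix with strictly positive entries;
`projDiam` is the case `m = n = Fin N`. -/
noncomputable def projectiveDiam {m n : Type*} (A : Matrix m n ℝ) : ℝ :=
  ⨆ i, ⨆ j, ⨆ k, ⨆ l, Real.log ((A i j * A k l) / (A i l * A k j))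

open Finset Real
open scoped Matrix

section Tanh

lemma tanh_nonneg_of_nonneg {t : ℝ} (ht : 0 ≤ t) : 0 ≤ tanh t := by
  rw [tanh_eq_sinh_div_cosh]
  exact div_nonneg (sinh_nonneg_iff.2 ht) (cosh_pos t).le

lemma exp_two_mul_mul_one_sub_tanh (t : ℝ) : exp (2 * t) * (1 - tanh t) = 1 + tanh t := by
  rw [tanh_eq, two_mul, exp_add, exp_neg]
  field_simp
  ring

lemma sqrt_mul_le_add_div_two {a b : ℝ} (ha : 0 ≤ a) (hb : 0 ≤ b) : √(a * b) ≤ (a + b) / 2 :=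
  sqrt_le_iff.2 ⟨by positivity, by linarith [four_mul_le_sq_add a b]⟩

/-- The hypothesis bounds the odds ratio by `exp D`, cleared of denominators. With
`u ^ 2 = a * (1 - b)` and `v ^ 2 = (1 - a) * b`, the difference `a - b` factors as
`(u - v) * (u + v)`, and `u + v ≤ 1` by AM-GM. -/
lemma sub_le_tanh_of_odds_le {a b D : ℝ} (ha : a ∈ Set.Icc 0 1) (hb : b ∈ Set.Icc 0 1)
    (hD : 0 ≤ D) (h : a * (1 - b) ≤ exp D * ((1 - a) * b)) : a - b ≤ tanh (D / 4) := by
  obtain ⟨ha₀, ha₁⟩ := ha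
  obtain ⟨hb₀, hb₁⟩ := hb
  rw [← sub_nonneg] at ha₁ hb₁
  set u := √(a * (1 - b))
  set v := √((1 - a) * b)
  set τ := tanh (D / 4)
  have hτ : 0 ≤ τ := tanh_nonneg_of_nonneg (by positivity)
  have hu : u ^ 2 = a * (1 - b) := sq_sqrt (by positivity)
  have hv : v ^ 2 = (1 - a) * b := sq_sqrt (by positivity)
  have huv₀ : 0 ≤ u + v := by positivity
  have huv₁ : u + v ≤ 1 := by
    linarith [sqrt_mul_le_add_div_two ha₀ hb₁, sqrt_mul_le_add_div_two ha₁ hb₀]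
  have hu_le : u ≤ exp (2 * (D / 4)) * v := by
    calc u ≤ √(exp D * ((1 - a) * b)) := sqrt_le_sqrt h
      _ = exp (2 * (D / 4)) * v := by
        rw [sqrt_mul (exp_pos D).le, ← exp_half, show D / 2 = 2 * (D / 4) by ring]
  have hsub : u - v ≤ τ * (u + v) := by
    have := mul_le_mul_of_nonneg_right hu_le (sub_nonneg.2 (tanh_lt_one (D / 4)).le)
    rw [mul_right_comm, exp_two_mul_mul_one_sub_tanh] at this
    linarith
  calc a - b = (u - v) * (u + v) := by linarith
    _ ≤ τ * (u + v) * (u + v) := by gcongr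
    _ = τ * (u + v) ^ 2 := by ring
    _ ≤ τ := mul_le_of_le_one_right hτ (pow_le_one₀ huv₀ huv₁)

end Tanh

section Averages

variable {ι : Type*} [Fintype ι] {p q s : ι → ℝ} {c D : ℝ}

lemma sum_mul_sub_sum_mul_le (hpq : ∑ j, p j = ∑ j, q j) (hs : ∀ j l, s j - s l ≤ c) :
    ∑ j, p j * s j - ∑ j, q j * s j ≤ (∑ j with q j ≤ p j, (p j - q j)) * c := by
  rcases isEmpty_or_nonempty ι with _ | _
  · simp
  obtain ⟨m, hm⟩ := Finite.exists_min s
  calc ∑ j, p j * s j - ∑ j, q j * s j = ∑ j, (p j - q j) * (s j - s m) := by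
        simp only [sub_mul, mul_sub, sum_sub_distrib, ← sum_mul, hpq]
        ring
    _ ≤ ∑ j, if q j ≤ p j then (p j - q j) * c else 0 := by
        gcongr with j
        split_ifs with hj
        · exact mul_le_mul_of_nonneg_left (hs j m) (sub_nonneg.2 hj)
        · exact mul_nonpos_of_nonpos_of_nonneg (by linarith) (sub_nonneg.2 (hm j))
    _ = (∑ j with q j ≤ p j, (p j - q j)) * c := by rw [← sum_filter, sum_mul]

lemma sum_sub_le_tanh_of_crossRatio_le (S : Finset ι) (hp : ∀ j, 0 ≤ p j) (hq : ∀ j, 0 ≤ q j)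
    (hp₁ : ∑ j, p j = 1) (hq₁ : ∑ j, q j = 1) (hD : 0 ≤ D)
    (h : ∀ j l, p j * q l ≤ exp D * (p l * q j)) :
    ∑ j ∈ S, (p j - q j) ≤ tanh (D / 4) := by
  classical
  have mem_Icc {w : ι → ℝ} (hw : ∀ j, 0 ≤ w j) (hw₁ : ∑ j, w j = 1) :
      ∑ j ∈ S, w j ∈ Set.Icc 0 1 :=
    ⟨sum_nonneg fun j _ ↦ hw j, hw₁ ▸ sum_le_univ_sum_of_nonneg hw⟩
  have one_sub {w : ι → ℝ} (hw₁ : ∑ j, w j = 1) : 1 - ∑ j ∈ S, w j = ∑ j ∈ Sᶜ, w j := by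
    rw [← hw₁, ← sum_add_sum_compl S w, add_sub_cancel_left]
  rw [sum_sub_distrib]
  refine sub_le_tanh_of_odds_le (mem_Icc hp hp₁) (mem_Icc hq hq₁) hD ?_
  rw [one_sub hp₁, one_sub hq₁, sum_mul_sum, mul_comm (∑ j ∈ Sᶜ, p j), sum_mul_sum]
  simp only [mul_sum]
  exact sum_le_sum fun j _ ↦ sum_le_sum fun l _ ↦ (h j l).trans_eq (by rw [mul_comm (p l)])

lemma centerMass_sub_centerMass_le (hp : ∀ j, 0 ≤ p j) (hq : ∀ j, 0 ≤ q j)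
    (hp₀ : 0 < ∑ j, p j) (hq₀ : 0 < ∑ j, q j) (hD : 0 ≤ D)
    (h : ∀ j l, p j * q l ≤ exp D * (p l * q j)) (hs : ∀ j l, s j - s l ≤ c) :
    univ.centerMass p s - univ.centerMass q s ≤ tanh (D / 4) * c := by
  set P := ∑ j, p j with hP
  set Q := ∑ j, q j with hQ
  obtain ⟨i, -, -⟩ := exists_ne_zero_of_sum_ne_zero hp₀.ne'
  have hc : 0 ≤ c := by simpa using hs i i
  have hp₁ : ∑ j, p j / P = 1 := by rw [← sum_div, div_self hp₀.ne']
  have hq₁ : ∑ j, q j / Q = 1 := by rw [← sum_div, div_self hq₀.ne']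
  have hcross (j l : ι) : p j / P * (q l / Q) ≤ exp D * (p l / P * (q j / Q)) := by
    rw [div_mul_div_comm, div_mul_div_comm, ← mul_div_assoc]
    exact div_le_div_of_nonneg_right (h j l) (mul_pos hp₀ hq₀).le
  calc univ.centerMass p s - univ.centerMass q s
      = ∑ j, p j / P * s j - ∑ j, q j / Q * s j := by
        simp only [centerMass, smul_eq_mul, mul_sum, ← hP, ← hQ]
        ring_nf
    _ ≤ (∑ j with q j / Q ≤ p j / P, (p j / P - q j / Q)) * c :=
        sum_mul_sub_sum_mul_le (hp₁.trans hq₁.symm) hs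
    _ ≤ tanh (D / 4) * c := by
        gcongr
        exact sum_sub_le_tanh_of_crossRatio_le _ (fun j ↦ div_nonneg (hp j) hp₀.le)
          (fun j ↦ div_nonneg (hq j) hq₀.le) hp₁ hq₁ hD hcross

end Averages

section LogPartition

variable {ι : Type*} [Fintype ι]

/-- The log-partition function (unnormalised cumulant generating function) of `s` under the weights
`w`. Its derivative in `t` is an average of `s`, which turns a bound on averages into one on ratios
of linear forms. -/
noncomputable def logPartition (w s : ι → ℝ) (t : ℝ) : ℝ :=
  log (∑ j, w j * exp (t * s j))

lemma hasDerivAt_logPartition [Nonempty ι] {w : ι → ℝ} (hw : ∀ j, 0 < w j) (s : ι → ℝ) (t : ℝ) :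
    HasDerivAt (logPartition w s) (univ.centerMass (fun j ↦ w j * exp (t * s j)) s) t := by
  have hsum : HasDerivAt (fun t ↦ ∑ j, w j * exp (t * s j)) (∑ j, w j * exp (t * s j) * s j) t :=
    HasDerivAt.fun_sum fun j _ ↦ by
      simpa only [mul_assoc] using ((hasDerivAt_mul_const (s j)).exp.const_mul (w j))
  have hpos : 0 < ∑ j, w j * exp (t * s j) :=
    sum_pos (fun j _ ↦ mul_pos (hw j) (exp_pos _)) univ_nonempty
  simpa only [centerMass, smul_eq_mul, div_eq_inv_mul] using! hsum.log hpos.ne'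

lemma logPartition_increment_sub_le [Nonempty ι] {p q s : ι → ℝ} {c D : ℝ} (hp : ∀ j, 0 < p j)
    (hq : ∀ j, 0 < q j) (hD : 0 ≤ D) (h : ∀ j l, p j * q l ≤ exp D * (p l * q j))
    (hs : ∀ j l, s j - s l ≤ c) :
    (logPartition p s 1 - logPartition q s 1) - (logPartition p s 0 - logPartition q s 0) ≤
      tanh (D / 4) * c := by
  have hderiv (t : ℝ) := (hasDerivAt_logPartition hp s t).sub (hasDerivAt_logPartition hq s t)
  have htilt {w : ι → ℝ} (hw : ∀ j, 0 < w j) (t : ℝ) (j : ι) : 0 < w j * exp (t * s j) :=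
    mul_pos (hw j) (exp_pos _)
  have hcross (t : ℝ) (j l : ι) : p j * exp (t * s j) * (q l * exp (t * s l)) ≤
      exp D * (p l * exp (t * s l) * (q j * exp (t * s j))) := by
    calc p j * exp (t * s j) * (q l * exp (t * s l))
        = p j * q l * (exp (t * s j) * exp (t * s l)) := by ring
      _ ≤ exp D * (p l * q j) * (exp (t * s j) * exp (t * s l)) :=
          mul_le_mul_of_nonneg_right (h j l) (by positivity)
      _ = exp D * (p l * exp (t * s l) * (q j * exp (t * s j))) := by ring
  have hbound (t : ℝ) : deriv (logPartition p s - logPartition q s) t ≤ tanh (D / 4) * c := by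
    rw [(hderiv t).deriv]
    exact centerMass_sub_centerMass_le (fun j ↦ (htilt hp t j).le) (fun j ↦ (htilt hq t j).le)
      (sum_pos (fun j _ ↦ htilt hp t j) univ_nonempty)
      (sum_pos (fun j _ ↦ htilt hq t j) univ_nonempty) hD (hcross t) hs
  simpa using image_sub_le_mul_sub_of_deriv_le (fun t ↦ (hderiv t).differentiableAt) hbound
    zero_le_one

end LogPartition

section HilbertDist

variable {ι : Type*} {x y : ι → ℝ}

lemma log_div_sub_log_div_le_hilbertDist [Finite ι] (hx : ∀ i, 0 < x i) (hy : ∀ i, 0 < y i)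
    (i k : ι) : log (x i / y i) - log (x k / y k) ≤ hilbertDist x y := by
  have hpos (j : ι) : 0 < x j / y j := div_pos (hx j) (hy j)
  have : Nonempty ι := ⟨i⟩
  obtain ⟨j, hj⟩ := exists_eq_ciInf_of_finite (f := fun i ↦ x i / y i)
  rw [← log_div (hpos i).ne' (hpos k).ne', hilbertDist]
  refine log_le_log (div_pos (hpos i) (hpos k)) (div_le_div₀ ?_ ?_ (hj ▸ hpos j) ?_)
  · exact (hpos i).le.trans (Finite.le_ciSup (fun i ↦ x i / y i) i)
  · exact Finite.le_ciSup (fun i ↦ x i / y i) i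
  · exact Finite.ciInf_le (fun i ↦ x i / y i) k

lemma exists_hilbertDist_eq [Finite ι] [Nonempty ι] (hx : ∀ i, 0 < x i) (hy : ∀ i, 0 < y i) :
    ∃ i k, hilbertDist x y = log (x i / y i) - log (x k / y k) := by
  obtain ⟨i, hi⟩ := exists_eq_ciSup_of_finite (f := fun i ↦ x i / y i)
  obtain ⟨k, hk⟩ := exists_eq_ciInf_of_finite (f := fun i ↦ x i / y i)
  refine ⟨i, k, ?_⟩
  rw [hilbertDist, ← hi, ← hk, log_div (div_pos (hx i) (hy i)).ne' (div_pos (hx k) (hy k)).ne']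

lemma log_dotProduct_div_sub_le [Fintype ι] [Nonempty ι] {p q : ι → ℝ} {D : ℝ}
    (hp : ∀ j, 0 < p j) (hq : ∀ j, 0 < q j) (hD : 0 ≤ D)
    (h : ∀ j l, p j * q l ≤ exp D * (p l * q j)) (hx : ∀ j, 0 < x j) (hy : ∀ j, 0 < y j) :
    log ((p ⬝ᵥ x) / (p ⬝ᵥ y)) - log ((q ⬝ᵥ x) / (q ⬝ᵥ y)) ≤ tanh (D / 4) * hilbertDist x y := by
  set s : ι → ℝ := fun j ↦ log (x j / y j) with hs
  have logPartition_sub {w : ι → ℝ} (hw : ∀ j, 0 < w j) :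
      logPartition (w * y) s 1 - logPartition (w * y) s 0 = log ((w ⬝ᵥ x) / (w ⬝ᵥ y)) := by
    have hwz {z : ι → ℝ} (hz : ∀ j, 0 < z j) : 0 < w ⬝ᵥ z :=
      sum_pos (fun j _ ↦ mul_pos (hw j) (hz j)) univ_nonempty
    have hexp (j : ι) : w j * y j * exp (1 * s j) = w j * x j := by
      rw [one_mul, hs, exp_log (div_pos (hx j) (hy j)), mul_assoc, mul_div_cancel₀ _ (hy j).ne']
    rw [log_div (hwz hx).ne' (hwz hy).ne']
    simp only [logPartition, Pi.mul_apply, hexp, zero_mul, exp_zero, mul_one, dotProduct]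
  have hcross (j l : ι) : (p * y) j * (q * y) l ≤ exp D * ((p * y) l * (q * y) j) := by
    calc p j * y j * (q l * y l) = p j * q l * (y j * y l) := by ring
      _ ≤ exp D * (p l * q j) * (y j * y l) :=
          mul_le_mul_of_nonneg_right (h j l) (mul_pos (hy j) (hy l)).le
      _ = exp D * (p l * y l * (q j * y j)) := by ring
  rw [← logPartition_sub hp, ← logPartition_sub hq, sub_sub_sub_comm]
  exact logPartition_increment_sub_le (fun j ↦ mul_pos (hp j) (hy j))
    (fun j ↦ mul_pos (hq j) (hy j)) hD hcross (log_div_sub_log_div_le_hilbertDist hx hy)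

end HilbertDist

section ProjectiveDiam

variable {m n : Type*} [Finite m]

lemma log_crossRatio_le_projectiveDiam [Finite n] (A : Matrix m n ℝ) (i k : m) (j l : n) :
    log ((A i j * A k l) / (A i l * A k j)) ≤ projectiveDiam A :=
  Finite.le_ciSup_of_le i <| Finite.le_ciSup_of_le j <| Finite.le_ciSup_of_le k <|
    Finite.le_ciSup_of_le l le_rfl

lemma projectiveDiam_nonneg [Finite n] [Nonempty m] [Nonempty n] (A : Matrix m n ℝ) :
    0 ≤ projectiveDiam A := by
  obtain ⟨i⟩ := ‹Nonempty m›
  obtain ⟨j⟩ := ‹Nonempty n›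
  simpa only [log_div_self] using log_crossRatio_le_projectiveDiam A i i j j

lemma mul_le_exp_projectiveDiam_mul [Finite n] {A : Matrix m n ℝ} (hA : ∀ i j, 0 < A i j)
    (i k : m) (j l : n) : A i j * A k l ≤ exp (projectiveDiam A) * (A i l * A k j) := by
  have hden : 0 < A i l * A k j := mul_pos (hA i l) (hA k j)
  rw [← div_le_iff₀ hden, ← log_le_iff_le_exp (div_pos (mul_pos (hA i j) (hA k l)) hden)]
  exact log_crossRatio_le_projectiveDiam A i k j l

theorem birkhoff_contraction_general [Nonempty m] [Fintype n] [Nonempty n] {A : Matrix m n ℝ}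
    (hA : ∀ i j, 0 < A i j) {x y : n → ℝ} (hx : ∀ j, 0 < x j) (hy : ∀ j, 0 < y j) :
    hilbertDist (A *ᵥ x) (A *ᵥ y) ≤ tanh (projectiveDiam A / 4) * hilbertDist x y ∧
      tanh (projectiveDiam A / 4) < 1 := by
  refine ⟨?_, tanh_lt_one _⟩
  have mulVec_pos {z : n → ℝ} (hz : ∀ j, 0 < z j) (i : m) : 0 < (A *ᵥ z) i :=
    sum_pos (fun j _ ↦ mul_pos (hA i j) (hz j)) univ_nonempty
  obtain ⟨i, k, hik⟩ := exists_hilbertDist_eq (mulVec_pos hx) (mulVec_pos hy)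
  rw [hik]
  exact log_dotProduct_div_sub_le (hA i) (hA k) (projectiveDiam_nonneg A)
    (mul_le_exp_projectiveDiam_mul hA i k) hx hy

end ProjectiveDiam

/-- (Birkhoff) A matrix `A` with strictly positive entries acts on the open positive orthant
as a strict contraction in the Hilbert projective metric, with contraction ratio
`tanh(Δ(A)/4) < 1`. -/
theorem birkhoff_contraction {N : ℕ} [NeZero N] (A : Matrix (Fin N) (Fin N) ℝ)
    (hA : ∀ i j, 0 < A i j) (x y : Fin N → ℝ)
    (hx : ∀ i, 0 < x i) (hy : ∀ i, 0 < y i) :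
    dH (A.mulVec x) (A.mulVec y) ≤ Real.tanh (projDiam A / 4) * dH x y ∧
      Real.tanh (projDiam A / 4) < 1 :=
  birkhoff_contraction_general hA hx hy
end

section
/- Let A = [a_{ij}] be an N×N real matrix with strictly positive entries. Then the projective diameter of the map x ↦ Ax on the open positive orthant, namely sup{d_H(Ax, Ay) : x, y ∈ ℝ^N with strictly positive entries}, equals max over all indices i,j,k,ℓ of log((a_{ij} a_{kℓ})/(a_{iℓ} a_{kj})); in particular it is finite. -/
/-!
A bound `c` on the projective distance of `u` and `v` amounts to the inequalities
`u i * v k ≤ exp c * (u k * v i)`. For `u = A x` and `v = A y` both sides are bilinear in `x` and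
`y`, and an inequality between linear functionals holds on the open positive orthant if and only if
it holds on the closed one, that is, coefficientwise. Hence `c` bounds all the distances if and only
if `A i j * A k l ≤ exp c * (A k j * A i l)` for all `i, j, k, l`, which says that `c` bounds all
the logarithms of the cross ratios of `A`.
-/

open Matrix Real Set

theorem log_div_le_iff_le_exp_mul {p q c : ℝ} (hp : 0 < p) (hq : 0 < q) :
    log (p / q) ≤ c ↔ p ≤ exp c * q := by
  rw [log_le_iff_le_exp (div_pos hp hq), div_le_iff₀ hq]

theorem dH_le_iff {N : ℕ} [NeZero N] {u v : Fin N → ℝ} (hu : ∀ i, 0 < u i) (hv : ∀ i, 0 < v i)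
    {c : ℝ} : dH u v ≤ c ↔ ∀ i k, u i * v k ≤ exp c * (u k * v i) := by
  have hsup : 0 < ⨆ i, u i / v i := by
    obtain ⟨i, hi⟩ := exists_eq_ciSup_of_finite (f := fun i ↦ u i / v i)
    exact hi ▸ div_pos (hu i) (hv i)
  have hinf : 0 < ⨅ i, u i / v i := by
    obtain ⟨i, hi⟩ := exists_eq_ciInf_of_finite (f := fun i ↦ u i / v i)
    exact hi ▸ div_pos (hu i) (hv i)
  rw [dH, log_div_le_iff_le_exp_mul hsup hinf, mul_iInf_of_nonneg (exp_pos c).le,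
    ciSup_le_iff (finite_range _).bddAbove]
  refine forall_congr' fun i ↦ (le_ciInf_iff (finite_range _).bddBelow).trans <|
    forall_congr' fun k ↦ ?_
  rw [← mul_div_assoc, div_le_div_iff₀ (hv i) (hv k), mul_assoc]

section Orthant

variable {𝕜 ι : Type*} [Field 𝕜] [LinearOrder 𝕜] [IsStrictOrderedRing 𝕜] [Fintype ι]

theorem forall_pos_dotProduct_le_dotProduct_iff {a b : ι → 𝕜} :
    (∀ x : ι → 𝕜, (∀ j, 0 < x j) → a ⬝ᵥ x ≤ b ⬝ᵥ x) ↔ a ≤ b := by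
  classical
  refine ⟨fun h j ↦ ?_, fun h x hx ↦
    dotProduct_le_dotProduct_of_nonneg_right h fun j ↦ (hx j).le⟩
  let _ : TopologicalSpace 𝕜 := Preorder.topology 𝕜
  have : OrderTopology 𝕜 := ⟨rfl⟩
  have hclosed : IsClosed {x : ι → 𝕜 | a ⬝ᵥ x ≤ b ⬝ᵥ x} :=
    isClosed_le (by fun_prop) (by fun_prop)
  have hclosure : closure (univ.pi fun _ ↦ Ioi 0) ⊆ {x : ι → 𝕜 | a ⬝ᵥ x ≤ b ⬝ᵥ x} :=
    closure_minimal (fun x hx ↦ h x fun j ↦ hx j trivial) hclosed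
  have hmem : Pi.single j 1 ∈ closure (univ.pi fun _ : ι ↦ Ioi (0 : 𝕜)) := by
    rw [closure_pi_set, closure_Ioi]
    exact fun i _ ↦ (Pi.single_nonneg.2 zero_le_one : (0 : ι → 𝕜) ≤ Pi.single j 1) i
  simpa using hclosure hmem

theorem forall_pos_dotProduct_mul_dotProduct_le_iff {κ : Type*} [Fintype κ] {a a' : ι → 𝕜}
    {b b' : κ → 𝕜} :
    (∀ (x : ι → 𝕜) (y : κ → 𝕜), (∀ j, 0 < x j) → (∀ l, 0 < y l) →
        (a ⬝ᵥ x) * (b ⬝ᵥ y) ≤ (a' ⬝ᵥ x) * (b' ⬝ᵥ y)) ↔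
      ∀ j l, a j * b l ≤ a' j * b' l := by
  calc
    _ ↔ ∀ y : κ → 𝕜, (∀ l, 0 < y l) → ∀ x : ι → 𝕜, (∀ j, 0 < x j) →
          ((b ⬝ᵥ y) • a) ⬝ᵥ x ≤ ((b' ⬝ᵥ y) • a') ⬝ᵥ x := by
      simp only [smul_dotProduct, smul_eq_mul, mul_comm]
      tauto
    _ ↔ ∀ y : κ → 𝕜, (∀ l, 0 < y l) → ∀ j, (b ⬝ᵥ y) * a j ≤ (b' ⬝ᵥ y) * a' j := by
      simp only [forall_pos_dotProduct_le_dotProduct_iff, Pi.le_def, Pi.smul_apply, smul_eq_mul]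
    _ ↔ ∀ j, ∀ y : κ → 𝕜, (∀ l, 0 < y l) → (a j • b) ⬝ᵥ y ≤ (a' j • b') ⬝ᵥ y := by
      simp only [smul_dotProduct, smul_eq_mul, mul_comm]
      tauto
    _ ↔ ∀ j l, a j * b l ≤ a' j * b' l := by
      simp only [forall_pos_dotProduct_le_dotProduct_iff, Pi.le_def, Pi.smul_apply, smul_eq_mul]

theorem forall_pos_mulVec_mul_mulVec_le_iff {m : Type*} {A : Matrix m ι 𝕜} {c : 𝕜} {i k : m} :
    (∀ x y : ι → 𝕜, (∀ j, 0 < x j) → (∀ l, 0 < y l) →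
        (A *ᵥ x) i * (A *ᵥ y) k ≤ c * ((A *ᵥ x) k * (A *ᵥ y) i)) ↔
      ∀ j l, A i j * A k l ≤ c * (A k j * A i l) := by
  simpa only [mulVec, smul_dotProduct, Pi.smul_apply, smul_eq_mul, mul_assoc] using
    forall_pos_dotProduct_mul_dotProduct_le_iff (a := A i) (b := A k) (a' := c • A k) (b' := A i)

end Orthant

theorem mulVec_apply_pos {R m n : Type*} [Semiring R] [PartialOrder R] [IsStrictOrderedRing R]
    [Fintype n] [Nonempty n] {A : Matrix m n R} (hA : ∀ i j, 0 < A i j) {x : n → R}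
    (hx : ∀ j, 0 < x j) (i : m) : 0 < (A *ᵥ x) i :=
  Finset.sum_pos (fun j _ ↦ mul_pos (hA i j) (hx j)) Finset.univ_nonempty

theorem iSup_log_crossRatio_le_iff {m n : Type*} [Finite m] [Nonempty m] [Finite n] [Nonempty n]
    {A : Matrix m n ℝ} (hA : ∀ i j, 0 < A i j) {c : ℝ} :
    (⨆ i, ⨆ j, ⨆ k, ⨆ l, log ((A i j * A k l) / (A i l * A k j))) ≤ c ↔
      ∀ i j k l, A i j * A k l ≤ exp c * (A k j * A i l) := by
  simp only [ciSup_le_iff (finite_range _).bddAbove]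
  refine forall₄_congr fun i j k l ↦ ?_
  rw [log_div_le_iff_le_exp_mul (mul_pos (hA i j) (hA k l)) (mul_pos (hA i l) (hA k j)),
    mul_comm (A i l)]

theorem projective_diameter_formula_general {M : ℕ} [NeZero M] {n : Type*} [Fintype n] [Nonempty n]
    (A : Matrix (Fin M) n ℝ) (hA : ∀ i j, 0 < A i j) :
    IsLUB {d : ℝ | ∃ x y : n → ℝ, (∀ j, 0 < x j) ∧ (∀ j, 0 < y j) ∧ d = dH (A *ᵥ x) (A *ᵥ y)}
      (⨆ i, ⨆ j, ⨆ k, ⨆ l, log ((A i j * A k l) / (A i l * A k j))) := by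
  refine isLUB_iff_le_iff.2 fun c ↦ ?_
  calc (⨆ i, ⨆ j, ⨆ k, ⨆ l, log ((A i j * A k l) / (A i l * A k j))) ≤ c
    _ ↔ ∀ i k j l, A i j * A k l ≤ exp c * (A k j * A i l) := by
      rw [iSup_log_crossRatio_le_iff hA]
      exact forall_congr' fun i ↦ forall_comm
    _ ↔ ∀ x y : n → ℝ, (∀ j, 0 < x j) → (∀ j, 0 < y j) →
          ∀ i k, (A *ᵥ x) i * (A *ᵥ y) k ≤ exp c * ((A *ᵥ x) k * (A *ᵥ y) i) := by
      simp only [← forall_pos_mulVec_mul_mulVec_le_iff]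
      tauto
    _ ↔ ∀ x y : n → ℝ, (∀ j, 0 < x j) → (∀ j, 0 < y j) → dH (A *ᵥ x) (A *ᵥ y) ≤ c :=
      forall₄_congr fun x y hx hy ↦
        (dH_le_iff (mulVec_apply_pos hA hx) (mulVec_apply_pos hA hy)).symm
    _ ↔ c ∈ upperBounds {d : ℝ | ∃ x y : n → ℝ, (∀ j, 0 < x j) ∧ (∀ j, 0 < y j) ∧
          d = dH (A *ᵥ x) (A *ᵥ y)} := by
      constructor
      · rintro h _ ⟨x, y, hx, hy, rfl⟩
        exact h x y hx hy
      · exact fun h x y hx hy ↦ h ⟨x, y, hx, hy, rfl⟩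

/-- The projective diameter of the map `x ↦ Ax` on the open positive orthant, for a matrix `A`
with strictly positive entries, equals `max_{i,j,k,ℓ} log((a_{ij} a_{kℓ})/(a_{iℓ} a_{kj}))`;
in particular it is finite (it is a least upper bound of the set of attained distances). -/
theorem projective_diameter_formula {N : ℕ} [NeZero N] (A : Matrix (Fin N) (Fin N) ℝ)
    (hA : ∀ i j, 0 < A i j) :
    IsLUB {d : ℝ | ∃ x y : Fin N → ℝ, (∀ i, 0 < x i) ∧ (∀ i, 0 < y i) ∧
        d = dH (A.mulVec x) (A.mulVec y)}
      (⨆ i, ⨆ j, ⨆ k, ⨆ l, Real.log ((A i j * A k l) / (A i l * A k j))) :=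
  projective_diameter_formula_general A hA
end

section
/- Let Π = [π_{ij}] be an N×N stochastic matrix with strictly positive entries and let p_0, p_T be probability distributions on {1,…,N} with strictly positive entries. Define the map C from the open positive orthant of ℝ^N to itself as the composition C = D̂_0 ∘ E ∘ D_T ∘ E†, where E†(x)_j = Σ_i π_{ij} x_i, D_T(x)_j = p_T(j)/x_j, E(x)_i = Σ_j π_{ij} x_j, and D̂_0(x)_i = p_0(i)/x_i. Then C is a strict contraction in the Hilbert projective metric: there exists 0 ≤ λ < 1 such that d_H(C(x), C(y)) ≤ λ · d_H(x, y) for all vectors x, y with strictly positive entries. -/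
/-!
If every ratio `a_ik a_jl / (a_jk a_il)` of a positive matrix `A` is at least `t > 0`, then by
bilinearity `t (Az)_j (Ay)_i ≤ (Az)_i (Ay)_j` for all `z, y ≥ 0`. Let `s` and `S` be the least and
greatest ratio `x_k / y_k`. Taking `z = x - s y`, any two of the ratios `r_i = (Ax)_i / (Ay)_i`
satisfy `(1 - t) s + t r_j ≤ r_i`. Since `r_j ≤ S` and `log` is concave,
`log r_j - log r_i ≤ (1 - t) (log S - log s)`: this is a weak form of Birkhoff's theorem, with
`1 - t` in place of the sharp constant `(1 - √t) / (1 + √t)`. The maps `x ↦ p / x` are Hilbert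
isometries, so the product of the constants of `E†` and `E` is a constant for `C`.
-/

open scoped BigOperators

/-- The composition `C = D̂_0 ∘ E ∘ D_T ∘ E†`, where `E†(x)_j = Σ_i π_{ij} x_i`,
`D_T(x)_j = p_T(j)/x_j`, `E(x)_i = Σ_j π_{ij} x_j` and `D̂_0(x)_i = p_0(i)/x_i`. -/
noncomputable def Cmap {N : ℕ} (Pm : Matrix (Fin N) (Fin N) ℝ) (p0 pT : Fin N → ℝ)
    (x : Fin N → ℝ) : Fin N → ℝ :=
  fun i => p0 i / (∑ j, Pm i j * (pT j / (∑ k, Pm k j * x k)))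

open Matrix

section CrossRatio

variable {m n R : Type*}

/-- `t` bounds from below all the cross-ratios `a_ik a_jl / (a_jk a_il)` of the matrix `A`. The
denominators are cleared, so that the condition extends bilinearly to vectors. -/
def IsCrossRatioLowerBound [Mul R] [LE R] (A : Matrix m n R) (t : R) : Prop :=
  ∀ i j k l, t * (A j k * A i l) ≤ A i k * A j l

theorem IsCrossRatioLowerBound.le_one [Semiring R] [LinearOrder R] [IsStrictOrderedRing R]
    {A : Matrix m n R} {t : R} (ht : IsCrossRatioLowerBound A t) {i : m} {k : n}
    (hA : 0 < A i k) : t ≤ 1 :=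
  le_of_mul_le_mul_right (by simpa using ht i i k k) (mul_pos hA hA)

theorem exists_pos_isCrossRatioLowerBound [Field R] [LinearOrder R] [IsStrictOrderedRing R]
    [Finite m] [Finite n] [Nonempty m] [Nonempty n] {A : Matrix m n R}
    (hA : ∀ i j, 0 < A i j) : ∃ t, 0 < t ∧ IsCrossRatioLowerBound A t := by
  obtain ⟨⟨i₀, j₀, k₀, l₀⟩, hmin⟩ := Finite.exists_min
    fun q : m × m × n × n ↦
      A q.1 q.2.2.1 * A q.2.1 q.2.2.2 / (A q.2.1 q.2.2.1 * A q.1 q.2.2.2)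
  have hAA (i j k l) : 0 < A i k * A j l := mul_pos (hA i k) (hA j l)
  exact ⟨_, div_pos (hAA i₀ j₀ k₀ l₀) (hAA j₀ i₀ k₀ l₀),
    fun i j k l ↦ (le_div_iff₀ (hAA j i k l)).1 (hmin (i, j, k, l))⟩

variable [Fintype n]

theorem mulVec_pos [Semiring R] [PartialOrder R] [IsStrictOrderedRing R] [Nonempty n]
    {A : Matrix m n R} (hA : ∀ i j, 0 < A i j) {x : n → R} (hx : ∀ j, 0 < x j) (i : m) :
    0 < (A *ᵥ x) i :=
  Finset.sum_pos (fun j _ ↦ mul_pos (hA i j) (hx j)) Finset.univ_nonempty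

theorem IsCrossRatioLowerBound.mulVec_mul_mulVec_le [CommSemiring R] [PartialOrder R]
    [IsOrderedRing R] {A : Matrix m n R} {t : R} (ht : IsCrossRatioLowerBound A t) {z y : n → R}
    (hz : ∀ k, 0 ≤ z k) (hy : ∀ k, 0 ≤ y k) (i j : m) :
    t * ((A *ᵥ z) j * (A *ᵥ y) i) ≤ (A *ᵥ z) i * (A *ᵥ y) j := by
  simp only [mulVec, dotProduct]
  rw [Finset.sum_mul_sum, Finset.sum_mul_sum]
  simp only [Finset.mul_sum]
  refine Finset.sum_le_sum fun k _ ↦ Finset.sum_le_sum fun l _ ↦ ?_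
  calc t * (A j k * z k * (A i l * y l))
      = t * (A j k * A i l) * (z k * y l) := by ring
    _ ≤ A i k * A j l * (z k * y l) :=
        mul_le_mul_of_nonneg_right (ht i j k l) (mul_nonneg (hz k) (hy l))
    _ = A i k * z k * (A j l * y l) := by ring

variable [Field R] [LinearOrder R] [IsStrictOrderedRing R] {A : Matrix m n R} {x y : n → R}

theorem mulVec_div_mulVec_le {i : m} {s : R} (hA : ∀ k, 0 ≤ A i k) (hAy : 0 < (A *ᵥ y) i)
    (hs : ∀ k, x k ≤ s * y k) : (A *ᵥ x) i / (A *ᵥ y) i ≤ s := by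
  rw [div_le_iff₀ hAy]
  calc (A *ᵥ x) i ≤ (A *ᵥ (s • y)) i :=
        Finset.sum_le_sum fun k _ ↦ mul_le_mul_of_nonneg_left (hs k) (hA k)
    _ = s * (A *ᵥ y) i := by simp only [mulVec_smul, Pi.smul_apply, smul_eq_mul]

theorem IsCrossRatioLowerBound.le_mulVec_div_mulVec {t s : R} (ht : IsCrossRatioLowerBound A t)
    (hy : ∀ k, 0 ≤ y k) (hs : ∀ k, s * y k ≤ x k) {i j : m}
    (hi : 0 < (A *ᵥ y) i) (hj : 0 < (A *ᵥ y) j) :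
    (1 - t) * s + t * ((A *ᵥ x) j / (A *ᵥ y) j) ≤ (A *ᵥ x) i / (A *ᵥ y) i := by
  have hz (k) : 0 ≤ (x - s • y) k := sub_nonneg.2 (hs k)
  have hcross := ht.mulVec_mul_mulVec_le hz hy i j
  simp only [mulVec_sub, mulVec_smul, Pi.sub_apply, Pi.smul_apply, smul_eq_mul] at hcross
  have hexcess : t * ((A *ᵥ x) j / (A *ᵥ y) j - s) ≤ (A *ᵥ x) i / (A *ᵥ y) i - s := by
    rw [div_sub' hj.ne', div_sub' hi.ne', ← mul_div_assoc, div_le_div_iff₀ hj hi]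
    linarith
  linarith

end CrossRatio

section HilbertMetric

variable {N : ℕ} {x y : Fin N → ℝ}

theorem exists_dH_eq_log_sub_log [NeZero N] (hx : ∀ i, 0 < x i) (hy : ∀ i, 0 < y i) :
    ∃ a b, (∀ i, x i / y i ≤ x a / y a) ∧ (∀ i, x b / y b ≤ x i / y i) ∧
      dH x y = Real.log (x a / y a) - Real.log (x b / y b) := by
  obtain ⟨a, ha⟩ := Finite.exists_max fun i ↦ x i / y i
  obtain ⟨b, hb⟩ := Finite.exists_min fun i ↦ x i / y i
  have hsup : ⨆ i, x i / y i = x a / y a :=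
    le_antisymm (ciSup_le ha) (Finite.le_ciSup (fun i ↦ x i / y i) a)
  have hinf : ⨅ i, x i / y i = x b / y b :=
    le_antisymm (Finite.ciInf_le (fun i ↦ x i / y i) b) (le_ciInf hb)
  refine ⟨a, b, ha, hb, ?_⟩
  rw [dH, hsup, hinf, Real.log_div (div_pos (hx a) (hy a)).ne' (div_pos (hx b) (hy b)).ne']

theorem dH_comm [NeZero N] (hx : ∀ i, 0 < x i) (hy : ∀ i, 0 < y i) : dH x y = dH y x := by
  have hle {u v : Fin N → ℝ} (hu : ∀ i, 0 < u i) (hv : ∀ i, 0 < v i) : dH u v ≤ dH v u := by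
    obtain ⟨a, b, -, -, huv⟩ := exists_dH_eq_log_sub_log hu hv
    obtain ⟨c, d, hc, hd, hvu⟩ := exists_dH_eq_log_sub_log hv hu
    have hbc := Real.log_le_log (div_pos (hv b) (hu b)) (hc b)
    have hda := Real.log_le_log (div_pos (hv d) (hu d)) (hd a)
    rw [← inv_div (u b), Real.log_inv] at hbc
    rw [← inv_div (u a), Real.log_inv] at hda
    linarith
  exact (hle hx hy).antisymm (hle hy hx)

theorem dH_div_div {p : Fin N → ℝ} (hp : ∀ i, p i ≠ 0) (x y : Fin N → ℝ) :
    dH (p / x) (p / y) = dH y x := by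
  simp only [dH, Pi.div_apply, div_div_div_cancel_left' _ _ (hp _)]

end HilbertMetric

/-- A map between positive orthants that multiplies Hilbert distances by at most `c`. Positivity of
the values is part of the notion, since `dH` is a distance only between positive vectors. -/
structure HilbertLipschitzWith {M N : ℕ} (c : ℝ) (F : (Fin N → ℝ) → Fin M → ℝ) : Prop where
  pos : ∀ {x}, (∀ i, 0 < x i) → ∀ i, 0 < F x i
  dH_le : ∀ {x y}, (∀ i, 0 < x i) → (∀ i, 0 < y i) → dH (F x) (F y) ≤ c * dH x y

theorem HilbertLipschitzWith.comp {L M N : ℕ} {c d : ℝ} {G : (Fin M → ℝ) → Fin L → ℝ}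
    {F : (Fin N → ℝ) → Fin M → ℝ} (hG : HilbertLipschitzWith c G)
    (hF : HilbertLipschitzWith d F) (hc : 0 ≤ c) : HilbertLipschitzWith (c * d) (G ∘ F) where
  pos hx := hG.pos (hF.pos hx)
  dH_le {x y} hx hy :=
    calc dH (G (F x)) (G (F y)) ≤ c * dH (F x) (F y) := hG.dH_le (hF.pos hx) (hF.pos hy)
      _ ≤ c * (d * dH x y) := mul_le_mul_of_nonneg_left (hF.dH_le hx hy) hc
      _ = c * d * dH x y := (mul_assoc c d _).symm

theorem hilbertLipschitzWith_div {N : ℕ} [NeZero N] {p : Fin N → ℝ} (hp : ∀ i, 0 < p i) :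
    HilbertLipschitzWith 1 (p / ·) where
  pos hx i := div_pos (hp i) (hx i)
  dH_le hx hy := by rw [dH_div_div (fun i ↦ (hp i).ne'), dH_comm hy hx, one_mul]

section Birkhoff

variable {M N : ℕ} [NeZero M] [NeZero N] {A : Matrix (Fin M) (Fin N) ℝ}

theorem IsCrossRatioLowerBound.hilbertLipschitzWith_mulVec {t : ℝ}
    (ht : IsCrossRatioLowerBound A t) (ht0 : 0 ≤ t) (hA : ∀ i j, 0 < A i j) :
    HilbertLipschitzWith (1 - t) (A *ᵥ ·) where
  pos := mulVec_pos hA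
  dH_le {x y} hx hy := by
    have hAx := mulVec_pos hA hx
    have hAy := mulVec_pos hA hy
    obtain ⟨a, b, ha, hb, hxy⟩ := exists_dH_eq_log_sub_log hx hy
    obtain ⟨j, i, -, -, hAxy⟩ := exists_dH_eq_log_sub_log hAx hAy
    set s := x b / y b
    set rᵢ := (A *ᵥ x) i / (A *ᵥ y) i
    set rⱼ := (A *ᵥ x) j / (A *ᵥ y) j
    have hs : 0 < s := div_pos (hx b) (hy b)
    have hrⱼ : 0 < rⱼ := div_pos (hAx j) (hAy j)
    have ht1 : 0 ≤ 1 - t := sub_nonneg.2 (ht.le_one (hA i b))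
    have hlower : (1 - t) * s + t * rⱼ ≤ rᵢ :=
      ht.le_mulVec_div_mulVec (fun k ↦ (hy k).le) (fun k ↦ (le_div_iff₀ (hy k)).1 (hb k))
        (hAy i) (hAy j)
    have hupper : rⱼ ≤ x a / y a :=
      mulVec_div_mulVec_le (fun k ↦ (hA j k).le) (hAy j) fun k ↦ (div_le_iff₀ (hy k)).1 (ha k)
    have hconcave : (1 - t) * Real.log s + t * Real.log rⱼ ≤ Real.log ((1 - t) * s + t * rⱼ) :=
      strictConcaveOn_log_Ioi.concaveOn.2 hs hrⱼ ht1 ht0 (sub_add_cancel 1 t)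
    have hcomb : 0 < (1 - t) * s + t * rⱼ :=
      convex_Ioi (0 : ℝ) hs hrⱼ ht1 ht0 (sub_add_cancel 1 t)
    calc dH (A *ᵥ x) (A *ᵥ y) = Real.log rⱼ - Real.log rᵢ := hAxy
      _ ≤ (1 - t) * (Real.log rⱼ - Real.log s) := by
          linarith [Real.log_le_log hcomb hlower]
      _ ≤ (1 - t) * (Real.log (x a / y a) - Real.log s) := by gcongr
      _ = (1 - t) * dH x y := by rw [hxy]

theorem exists_hilbertLipschitzWith_mulVec (hA : ∀ i j, 0 < A i j) :
    ∃ c, 0 ≤ c ∧ c < 1 ∧ HilbertLipschitzWith c (A *ᵥ ·) := by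
  obtain ⟨t, ht0, ht⟩ := exists_pos_isCrossRatioLowerBound hA
  exact ⟨1 - t, sub_nonneg.2 (ht.le_one (hA 0 0)), sub_lt_self 1 ht0,
    ht.hilbertLipschitzWith_mulVec ht0.le hA⟩

end Birkhoff

theorem Cmap_eq_comp {N : ℕ} (Pm : Matrix (Fin N) (Fin N) ℝ) (p0 pT : Fin N → ℝ) :
    Cmap Pm p0 pT = (p0 / ·) ∘ (Pm *ᵥ ·) ∘ (pT / ·) ∘ (Pmᵀ *ᵥ ·) :=
  rfl

theorem Cmap_strict_contraction_general {N : ℕ} [NeZero N] (Pm : Matrix (Fin N) (Fin N) ℝ)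
    (hpos : ∀ i j, 0 < Pm i j) (p0 pT : Fin N → ℝ) (hp0 : ∀ i, 0 < p0 i)
    (hpT : ∀ j, 0 < pT j) :
    ∃ lam : ℝ, 0 ≤ lam ∧ lam < 1 ∧
      ∀ x y : Fin N → ℝ, (∀ i, 0 < x i) → (∀ i, 0 < y i) →
        dH (Cmap Pm p0 pT x) (Cmap Pm p0 pT y) ≤ lam * dH x y := by
  obtain ⟨c, hc0, hc1, hE⟩ := exists_hilbertLipschitzWith_mulVec hpos
  obtain ⟨d, hd0, hd1, hEdagger⟩ := exists_hilbertLipschitzWith_mulVec (A := Pmᵀ)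
    fun i j ↦ hpos j i
  have hDT := (hilbertLipschitzWith_div hpT).comp hEdagger zero_le_one
  have hC := (hilbertLipschitzWith_div hp0).comp (hE.comp hDT hc0) zero_le_one
  rw [← Cmap_eq_comp, one_mul, one_mul] at hC
  exact ⟨c * d, mul_nonneg hc0 hd0, mul_lt_one_of_nonneg_of_lt_one_left hc0 hc1 hd1.le,
    fun _ _ ↦ hC.dH_le⟩

/-- For a stochastic matrix `Π` with strictly positive entries and strictly positive probability
distributions `p_0, p_T`, the composition `C = D̂_0 ∘ E ∘ D_T ∘ E†` is a strict contraction in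
the Hilbert projective metric on the open positive orthant. -/
theorem Cmap_strict_contraction {N : ℕ} [NeZero N] (Pm : Matrix (Fin N) (Fin N) ℝ)
    (hpos : ∀ i j, 0 < Pm i j) (hrow : ∀ i, ∑ j, Pm i j = 1)
    (p0 pT : Fin N → ℝ) (hp0 : ∀ i, 0 < p0 i) (hpT : ∀ j, 0 < pT j)
    (hp0sum : ∑ i, p0 i = 1) (hpTsum : ∑ j, pT j = 1) :
    ∃ lam : ℝ, 0 ≤ lam ∧ lam < 1 ∧
      ∀ x y : Fin N → ℝ, (∀ i, 0 < x i) → (∀ i, 0 < y i) →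
        dH (Cmap Pm p0 pT x) (Cmap Pm p0 pT y) ≤ lam * dH x y := by
  exact Cmap_strict_contraction_general Pm hpos p0 pT hp0 hpT
end

section
/- Let p be a strictly positive probability distribution on {1,…,N}×{1,…,N}, and let p_0, p_T be strictly positive probability distributions on {1,…,N}. Then there exist vectors φ̂, φ ∈ ℝ^N with strictly positive entries such that q°(a,b) := φ̂(a)·p(a,b)·φ(b) is a probability distribution on {1,…,N}×{1,…,N} with marginals Σ_b q°(a,b) = p_0(a) and Σ_a q°(a,b) = p_T(b); moreover q° is the unique minimizer of the relative entropy D(q‖p) over all probability distributions q on {1,…,N}×{1,…,N} satisfying Σ_b q(a,b) = p_0(a) and Σ_a q(a,b) = p_T(b) for all a, b. -/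
open scoped BigOperators

/-- The relative entropy `D(Q‖P) = Σ_s Q(s)·log(Q(s)/P(s))` of probability distributions on a
finite set (with the convention `0·log 0 = 0`), valid when `Supp(Q) ⊆ Supp(P)`. -/
noncomputable def relEnt {α : Type*} [Fintype α] (Q P : α → ℝ) : ℝ :=
  ∑ s, Q s * Real.log (Q s / P s)

/-!
For fixed `φ`, the condition on the first marginal forces `φ̂ = p₀ / (p φ)`, and the condition on
the second one is then the vanishing of the gradient of the dual functional
`∑ b, p_T b * log (φ b) - ∑ a, p₀ a * log ((p φ) a)`. Because `p₀` and `p_T` have the same mass,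
this functional is invariant under scaling of `φ`, so it suffices to maximise it on the simplex.
Its exponential is continuous there and vanishes on the boundary, so the maximum is attained at an
interior point. Optimality and uniqueness follow from the Pythagorean identity
`D(q‖p) = D(q‖q°) + D(q°‖p)`: the function `log (q° / p)` is a sum `log φ̂ + log φ`, so its
integral against `q` depends only on the marginals of `q`.
-/

open Filter Matrix Real Topology

section RelativeEntropy

variable {ι α β : Type*} [Fintype ι] [Fintype α] [Fintype β]

lemma relEnt_eq_sum_mul_klFun {q r : ι → ℝ} (hr : ∀ i, r i ≠ 0) (hsum : ∑ i, q i = ∑ i, r i) :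
    relEnt q r = ∑ i, r i * InformationTheory.klFun (q i / r i) := by
  have hterm (i : ι) :
      r i * InformationTheory.klFun (q i / r i) = q i * log (q i / r i) + (r i - q i) := by
    rw [InformationTheory.klFun_apply]
    field_simp [hr i]
    ring
  simp only [hterm, Finset.sum_add_distrib, Finset.sum_sub_distrib, hsum, sub_self, add_zero,
    relEnt]

lemma relEnt_pos {q r : ι → ℝ} (hq : ∀ i, 0 ≤ q i) (hr : ∀ i, 0 < r i)
    (hsum : ∑ i, q i = ∑ i, r i) (hne : q ≠ r) : 0 < relEnt q r := by
  have hdiv (i : ι) : 0 ≤ q i / r i := div_nonneg (hq i) (hr i).le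
  have hkl (i : ι) : 0 ≤ InformationTheory.klFun (q i / r i) :=
    InformationTheory.klFun_nonneg (hdiv i)
  obtain ⟨j, hj⟩ := Function.ne_iff.mp hne
  have hklj : InformationTheory.klFun (q j / r j) ≠ 0 := by
    rwa [Ne, InformationTheory.klFun_eq_zero_iff (hdiv j), div_eq_one_iff_eq (hr j).ne']
  rw [relEnt_eq_sum_mul_klFun (fun i ↦ (hr i).ne') hsum]
  exact Finset.sum_pos' (fun i _ ↦ mul_nonneg (hr i).le (hkl i))
    ⟨j, Finset.mem_univ j, mul_pos (hr j) ((hkl j).lt_of_ne' hklj)⟩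

lemma relEnt_eq_relEnt_add_sum_mul_log (q : ι → ℝ) {p r : ι → ℝ} (hp : ∀ i, p i ≠ 0)
    (hr : ∀ i, r i ≠ 0) :
    relEnt q p = relEnt q r + ∑ i, q i * log (r i / p i) := by
  simp only [relEnt, ← Finset.sum_add_distrib]
  refine Finset.sum_congr rfl fun i _ ↦ ?_
  rcases eq_or_ne (q i) 0 with hq | hq
  · simp only [hq, zero_mul, add_zero]
  · rw [log_div hq (hp i), log_div hq (hr i), log_div (hr i) (hp i)]
    ring

lemma sum_mul_log_scaling_div (q : α × β → ℝ) {p : α × β → ℝ} {u : α → ℝ} {v : β → ℝ}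
    (hp : ∀ ab, p ab ≠ 0) (hu : ∀ a, u a ≠ 0) (hv : ∀ b, v b ≠ 0) :
    ∑ ab, q ab * log (u ab.1 * p ab * v ab.2 / p ab) =
      ∑ a, (∑ b, q (a, b)) * log (u a) + ∑ b, (∑ a, q (a, b)) * log (v b) := by
  have hlog (ab : α × β) :
      log (u ab.1 * p ab * v ab.2 / p ab) = log (u ab.1) + log (v ab.2) := by
    rw [mul_right_comm, mul_div_cancel_right₀ _ (hp ab), log_mul (hu _) (hv _)]
  simp only [hlog, mul_add, Finset.sum_add_distrib, Finset.sum_mul]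
  rw [Fintype.sum_prod_type, Fintype.sum_prod_type_right]

lemma relEnt_eq_relEnt_scaling_add {p q : α × β → ℝ} {u : α → ℝ} {v : β → ℝ}
    (hp : ∀ ab, p ab ≠ 0) (hu : ∀ a, u a ≠ 0) (hv : ∀ b, v b ≠ 0)
    (hfst : ∀ a, ∑ b, q (a, b) = ∑ b, u a * p (a, b) * v b)
    (hsnd : ∀ b, ∑ a, q (a, b) = ∑ a, u a * p (a, b) * v b) :
    relEnt q p = relEnt q (fun ab ↦ u ab.1 * p ab * v ab.2) +
      relEnt (fun ab ↦ u ab.1 * p ab * v ab.2) p := by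
  rw [relEnt_eq_relEnt_add_sum_mul_log q hp
    (r := fun ab ↦ u ab.1 * p ab * v ab.2)
    (fun ab ↦ mul_ne_zero (mul_ne_zero (hu _) (hp _)) (hv _))]
  congr 1
  rw [relEnt, sum_mul_log_scaling_div _ hp hu hv, sum_mul_log_scaling_div _ hp hu hv]
  simp only [hfst, hsnd]

lemma relEnt_scaling_lt {p q : α × β → ℝ} {u : α → ℝ} {v : β → ℝ}
    (hp : ∀ ab, 0 < p ab) (hu : ∀ a, 0 < u a) (hv : ∀ b, 0 < v b) (hq : ∀ ab, 0 ≤ q ab)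
    (hfst : ∀ a, ∑ b, q (a, b) = ∑ b, u a * p (a, b) * v b)
    (hsnd : ∀ b, ∑ a, q (a, b) = ∑ a, u a * p (a, b) * v b)
    (hne : q ≠ fun ab ↦ u ab.1 * p ab * v ab.2) :
    relEnt (fun ab ↦ u ab.1 * p ab * v ab.2) p < relEnt q p := by
  have hsum : ∑ ab, q ab = ∑ ab : α × β, u ab.1 * p ab * v ab.2 := by
    simp only [Fintype.sum_prod_type, hfst]
  rw [relEnt_eq_relEnt_scaling_add (fun ab ↦ (hp ab).ne') (fun a ↦ (hu a).ne')
    (fun b ↦ (hv b).ne') hfst hsnd]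
  exact lt_add_of_pos_left _
    (relEnt_pos hq (fun ab ↦ mul_pos (mul_pos (hu _) (hp _)) (hv _)) hsum hne)

end RelativeEntropy

section MatrixScaling

variable {α β : Type*} [Fintype β]

lemma mulVec_apply_pos_s7 {R : Type*} [Semiring R] [PartialOrder R] [IsStrictOrderedRing R]
    {A : Matrix α β R} {g : β → R} (hA : ∀ a b, 0 < A a b) (hg : 0 < g) (a : α) :
    0 < (A *ᵥ g) a := by
  obtain ⟨hg_nonneg, b, hb⟩ := Pi.lt_def.mp hg
  exact Finset.sum_pos' (fun b _ ↦ mul_nonneg (hA a b).le (hg_nonneg b))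
    ⟨b, Finset.mem_univ b, mul_pos (hA a b) hb⟩

lemma pos_of_mem_stdSimplex {R : Type*} [Semiring R] [PartialOrder R] [Nontrivial R] {g : β → R}
    (hg : g ∈ stdSimplex R β) : 0 < g := by
  refine lt_of_le_of_ne hg.1 ?_
  rintro rfl
  simpa using hg.2

lemma eventually_pos_and_mulVec_pos [Finite α] {A : Matrix α β ℝ} {g : β → ℝ}
    (hg : ∀ b, 0 < g b) (hAg : ∀ a, 0 < (A *ᵥ g) a) :
    ∀ᶠ h in 𝓝 g, (∀ b, 0 < h b) ∧ ∀ a, 0 < (A *ᵥ h) a := by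
  have hcont (a : α) : Continuous fun h : β → ℝ ↦ (A *ᵥ h) a :=
    (continuous_apply a).comp (continuous_const.matrix_mulVec continuous_id)
  rw [eventually_and, eventually_all, eventually_all]
  exact ⟨fun b ↦ (continuous_apply b).continuousAt.eventually_const_lt (hg b),
    fun a ↦ (hcont a).continuousAt.eventually_const_lt (hAg a)⟩

variable [Fintype α]

/-- The function on vectors `g` whose critical points yield the diagonal scalings of `A` with row
sums `r` and column sums `c`: the exponential of the dual objective
`∑ b, c b * log (g b) - ∑ a, r a * log ((A *ᵥ g) a)`. In product form it remains continuous
where coordinates of `g` vanish. -/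
noncomputable def scalingObjective (A : Matrix α β ℝ) (r : α → ℝ) (c g : β → ℝ) : ℝ :=
  (∏ b, g b ^ c b) / ∏ a, (A *ᵥ g) a ^ r a

variable {A : Matrix α β ℝ} {r : α → ℝ} {c g : β → ℝ}

lemma scalingObjective_pos (hg : ∀ b, 0 < g b) (hAg : ∀ a, 0 < (A *ᵥ g) a) :
    0 < scalingObjective A r c g :=
  div_pos (Finset.prod_pos fun b _ ↦ rpow_pos_of_pos (hg b) _)
    (Finset.prod_pos fun a _ ↦ rpow_pos_of_pos (hAg a) _)

lemma scalingObjective_eq_zero {b : β} (hg : g b = 0) (hc : c b ≠ 0) :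
    scalingObjective A r c g = 0 := by
  rw [scalingObjective, Finset.prod_eq_zero (Finset.mem_univ b) (by rw [hg, zero_rpow hc]),
    zero_div]

lemma scalingObjective_smul (hg : ∀ b, 0 ≤ g b) (hAg : ∀ a, 0 ≤ (A *ᵥ g) a)
    (hsum : ∑ a, r a = ∑ b, c b) {t : ℝ} (ht : 0 < t) :
    scalingObjective A r c (t • g) = scalingObjective A r c g := by
  have hnum : ∏ b, (t • g) b ^ c b = t ^ (∑ b, c b) * ∏ b, g b ^ c b := by
    simp only [Pi.smul_apply, smul_eq_mul, mul_rpow ht.le (hg _), Finset.prod_mul_distrib,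
      rpow_sum_of_pos ht]
  have hden : ∏ a, (A *ᵥ (t • g)) a ^ r a = t ^ (∑ b, c b) * ∏ a, (A *ᵥ g) a ^ r a := by
    simp only [mulVec_smul, Pi.smul_apply, smul_eq_mul, mul_rpow ht.le (hAg _),
      Finset.prod_mul_distrib, ← hsum, rpow_sum_of_pos ht]
  rw [scalingObjective, hnum, hden, mul_div_mul_left _ _ (rpow_pos_of_pos ht _).ne',
    scalingObjective]

lemma continuousOn_scalingObjective (hr : ∀ a, 0 ≤ r a) (hc : ∀ b, 0 ≤ c b) :
    ContinuousOn (scalingObjective A r c) {g | ∀ a, 0 < (A *ᵥ g) a} := by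
  refine ContinuousOn.div (Continuous.continuousOn ?_) (Continuous.continuousOn ?_) fun g hg ↦
    (Finset.prod_pos fun a _ ↦ rpow_pos_of_pos (hg a) _).ne'
  · exact continuous_finsetProd _ fun b _ ↦
      (continuous_apply b).rpow_const fun _ ↦ .inr (hc b)
  · exact continuous_finsetProd _ fun a _ ↦
      ((continuous_apply a).comp (continuous_const.matrix_mulVec continuous_id)).rpow_const
        fun _ ↦ .inr (hr a)

lemma exists_pos_isMaxOn_stdSimplex_scalingObjective [Nonempty β] (hA : ∀ a b, 0 < A a b)
    (hr : ∀ a, 0 ≤ r a) (hc : ∀ b, 0 < c b) :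
    ∃ g : β → ℝ, (∀ b, 0 < g b) ∧ IsMaxOn (scalingObjective A r c) (stdSimplex ℝ β) g := by
  have hAg {g : β → ℝ} (hg : g ∈ stdSimplex ℝ β) : ∀ a, 0 < (A *ᵥ g) a :=
    mulVec_apply_pos_s7 hA (pos_of_mem_stdSimplex hg)
  obtain ⟨w, hw, hw_pos⟩ : ∃ w ∈ stdSimplex ℝ β, ∀ b, 0 < w b :=
    ⟨fun _ ↦ (Fintype.card β : ℝ)⁻¹, ⟨fun _ ↦ by positivity, by simp⟩, fun _ ↦ by positivity⟩
  obtain ⟨g, hg, hmax⟩ := (isCompact_stdSimplex ℝ β).exists_isMaxOn ⟨w, hw⟩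
    ((continuousOn_scalingObjective hr fun b ↦ (hc b).le).mono fun _ ↦ hAg)
  have hpos : 0 < scalingObjective A r c g :=
    (scalingObjective_pos hw_pos (hAg hw)).trans_le (hmax hw)
  exact ⟨g, fun b ↦ (hg.1 b).lt_of_ne' fun hb ↦
    hpos.ne' (scalingObjective_eq_zero hb (hc b).ne'), hmax⟩

lemma exists_pos_isLocalMax_scalingObjective [Nonempty β] (hA : ∀ a b, 0 < A a b)
    (hr : ∀ a, 0 ≤ r a) (hc : ∀ b, 0 < c b) (hsum : ∑ a, r a = ∑ b, c b) :
    ∃ g : β → ℝ, (∀ b, 0 < g b) ∧ IsLocalMax (scalingObjective A r c) g := by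
  obtain ⟨g, hg, hmax⟩ := exists_pos_isMaxOn_stdSimplex_scalingObjective hA hr hc
  have hAg : ∀ a, 0 < (A *ᵥ g) a := mulVec_apply_pos_s7 hA (lt_of_strongLT hg)
  refine ⟨g, hg, ?_⟩
  filter_upwards [eventually_pos_and_mulVec_pos hg hAg] with h ⟨hh, hAh⟩
  have hs : 0 < ∑ b, h b := Finset.sum_pos (fun b _ ↦ hh b) Finset.univ_nonempty
  have hmem : (∑ b, h b)⁻¹ • h ∈ stdSimplex ℝ β := by
    refine ⟨fun b ↦ mul_nonneg (inv_pos.mpr hs).le (hh b).le, ?_⟩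
    simp only [Pi.smul_apply, smul_eq_mul, ← Finset.mul_sum, inv_mul_cancel₀ hs.ne']
  calc scalingObjective A r c h = scalingObjective A r c ((∑ b, h b)⁻¹ • h) :=
        (scalingObjective_smul (fun b ↦ (hh b).le) (fun a ↦ (hAh a).le) hsum
          (inv_pos.mpr hs)).symm
    _ ≤ scalingObjective A r c g := hmax hmem

lemma log_scalingObjective (hg : ∀ b, 0 < g b) (hAg : ∀ a, 0 < (A *ᵥ g) a) :
    log (scalingObjective A r c g) =
      ∑ b, c b * log (g b) - ∑ a, r a * log ((A *ᵥ g) a) := by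
  have hnum (b : β) : g b ^ c b ≠ 0 := (rpow_pos_of_pos (hg b) _).ne'
  have hden (a : α) : (A *ᵥ g) a ^ r a ≠ 0 := (rpow_pos_of_pos (hAg a) _).ne'
  rw [scalingObjective, log_div (Finset.prod_ne_zero_iff.mpr fun b _ ↦ hnum b)
    (Finset.prod_ne_zero_iff.mpr fun a _ ↦ hden a), log_prod fun b _ ↦ hnum b,
    log_prod fun a _ ↦ hden a]
  simp only [log_rpow (hg _), log_rpow (hAg _)]

lemma hasLineDerivAt_log_scalingObjective (hg : ∀ b, 0 < g b) (hAg : ∀ a, 0 < (A *ᵥ g) a)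
    (v : β → ℝ) :
    HasLineDerivAt ℝ (fun h ↦ log (scalingObjective A r c h))
      (∑ b, c b * (v b / g b) - ∑ a, r a * ((A *ᵥ v) a / (A *ᵥ g) a)) g v := by
  have hlog {x : ℝ} (hx : 0 < x) (y : ℝ) : HasDerivAt (fun t ↦ log (x + t * y)) (y / x) 0 := by
    simpa using (((hasDerivAt_id (0 : ℝ)).mul_const y).const_add x).log (by simpa using hx.ne')
  have hdual : HasLineDerivAt ℝ
      (fun h ↦ ∑ b, c b * log (h b) - ∑ a, r a * log ((A *ᵥ h) a))
      (∑ b, c b * (v b / g b) - ∑ a, r a * ((A *ᵥ v) a / (A *ᵥ g) a)) g v := by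
    simp only [HasLineDerivAt, mulVec_add, mulVec_smul, Pi.add_apply, Pi.smul_apply, smul_eq_mul]
    exact (HasDerivAt.fun_sum fun b _ ↦ (hlog (hg b) _).const_mul _).sub
      (HasDerivAt.fun_sum fun a _ ↦ (hlog (hAg a) _).const_mul _)
  refine hdual.congr_of_eventuallyEq ?_
  filter_upwards [eventually_pos_and_mulVec_pos hg hAg] with h ⟨hh, hAh⟩
  exact log_scalingObjective hh hAh

lemma div_eq_sum_of_isLocalMax_scalingObjective
    (hmax : IsLocalMax (scalingObjective A r c) g) (hg : ∀ b, 0 < g b)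
    (hAg : ∀ a, 0 < (A *ᵥ g) a) (b : β) :
    c b / g b = ∑ a, r a * (A a b / (A *ᵥ g) a) := by
  classical
  have hmax_log : IsLocalMax (fun h ↦ log (scalingObjective A r c h)) g := by
    filter_upwards [hmax, eventually_pos_and_mulVec_pos hg hAg] with h hle ⟨hh, hAh⟩
    exact log_le_log (scalingObjective_pos hh hAh) hle
  have hzero : ∑ b', c b' * ((Pi.single b 1 : β → ℝ) b' / g b') -
      ∑ a, r a * ((A *ᵥ Pi.single b 1) a / (A *ᵥ g) a) = 0 :=
    hmax_log.hasLineDerivAt_eq_zero (hasLineDerivAt_log_scalingObjective hg hAg (Pi.single b 1))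
  simpa [Pi.single_apply, ite_div, div_eq_mul_inv, sub_eq_zero] using hzero

theorem exists_pos_scaling_of_sum_eq (hA : ∀ a b, 0 < A a b) (hr : ∀ a, 0 < r a)
    (hc : ∀ b, 0 < c b) (hsum : ∑ a, r a = ∑ b, c b) :
    ∃ (u : α → ℝ) (v : β → ℝ), (∀ a, 0 < u a) ∧ (∀ b, 0 < v b) ∧
      (∀ a, ∑ b, u a * A a b * v b = r a) ∧ ∀ b, ∑ a, u a * A a b * v b = c b := by
  cases isEmpty_or_nonempty β
  · have : IsEmpty α := by
      by_contra! hα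
      exact (Finset.sum_pos (fun a _ ↦ hr a) Finset.univ_nonempty).ne' (by simpa using hsum)
    exact ⟨isEmptyElim, isEmptyElim, isEmptyElim, isEmptyElim, isEmptyElim, isEmptyElim⟩
  obtain ⟨v, hv, hmax⟩ :=
    exists_pos_isLocalMax_scalingObjective hA (fun a ↦ (hr a).le) hc hsum
  have hAv : ∀ a, 0 < (A *ᵥ v) a := mulVec_apply_pos_s7 hA (lt_of_strongLT hv)
  refine ⟨fun a ↦ r a / (A *ᵥ v) a, v, fun a ↦ div_pos (hr a) (hAv a), hv, fun a ↦ ?_, fun b ↦ ?_⟩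
  · calc ∑ b, r a / (A *ᵥ v) a * A a b * v b = r a / (A *ᵥ v) a * (A *ᵥ v) a := by
          simp only [mul_assoc, ← Finset.mul_sum, mulVec, dotProduct]
      _ = r a := div_mul_cancel₀ _ (hAv a).ne'
  · calc ∑ a, r a / (A *ᵥ v) a * A a b * v b
        = (∑ a, r a * (A a b / (A *ᵥ v) a)) * v b := by
          simp only [Finset.sum_mul, div_mul_eq_mul_div, mul_div_assoc]
      _ = c b := by
          rw [← div_eq_sum_of_isLocalMax_scalingObjective hmax hv hAv b,
            div_mul_cancel₀ _ (hv b).ne']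

end MatrixScaling

theorem schroedinger_bridge_one_step_general {α β : Type*} [Fintype α] [Fintype β]
    (p : α × β → ℝ) (hp : ∀ ab, 0 < p ab) (p0 : α → ℝ) (pT : β → ℝ) (hp0 : ∀ a, 0 < p0 a)
    (hpT : ∀ b, 0 < pT b) (hsum : ∑ a, p0 a = ∑ b, pT b) :
    ∃ (gh : α → ℝ) (g : β → ℝ), (∀ a, 0 < gh a) ∧ (∀ b, 0 < g b) ∧
      (∀ a, ∑ b, gh a * p (a, b) * g b = p0 a) ∧
      (∀ b, ∑ a, gh a * p (a, b) * g b = pT b) ∧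
      (∀ q : α × β → ℝ, (∀ ab, 0 ≤ q ab) →
        (∀ a, ∑ b, q (a, b) = p0 a) → (∀ b, ∑ a, q (a, b) = pT b) →
        q ≠ (fun ab ↦ gh ab.1 * p ab * g ab.2) →
        relEnt (fun ab ↦ gh ab.1 * p ab * g ab.2) p < relEnt q p) := by
  obtain ⟨gh, g, hgh, hg, hfst, hsnd⟩ :=
    exists_pos_scaling_of_sum_eq (A := Matrix.of fun a b ↦ p (a, b)) (fun _ _ ↦ hp _) hp0 hpT hsum
  exact ⟨gh, g, hgh, hg, hfst, hsnd, fun q hq hq_fst hq_snd hne ↦ relEnt_scaling_lt hp hgh hg hq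
    (fun a ↦ (hq_fst a).trans (hfst a).symm) (fun b ↦ (hq_snd b).trans (hsnd b).symm) hne⟩

/-- For a strictly positive prior `p` on `{1,…,N}×{1,…,N}` and strictly positive marginals
`p_0, p_T`, there exist strictly positive vectors `φ̂`, `φ` such that
`q°(a,b) = φ̂(a)·p(a,b)·φ(b)` is a probability distribution with the prescribed marginals;
moreover `q°` is the unique minimizer of `D(q‖p)` subject to the marginal constraints. -/
theorem schroedinger_bridge_one_step {N : ℕ} (p : Fin N × Fin N → ℝ)
    (hp : ∀ ab, 0 < p ab) (hpsum : ∑ ab, p ab = 1)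
    (p0 pT : Fin N → ℝ) (hp0 : ∀ a, 0 < p0 a) (hpT : ∀ b, 0 < pT b)
    (hp0sum : ∑ a, p0 a = 1) (hpTsum : ∑ b, pT b = 1) :
    ∃ gh g : Fin N → ℝ, (∀ a, 0 < gh a) ∧ (∀ b, 0 < g b) ∧
      (∀ ab : Fin N × Fin N, 0 ≤ gh ab.1 * p ab * g ab.2) ∧
      (∑ ab : Fin N × Fin N, gh ab.1 * p ab * g ab.2) = 1 ∧
      (∀ a, ∑ b, gh a * p (a, b) * g b = p0 a) ∧
      (∀ b, ∑ a, gh a * p (a, b) * g b = pT b) ∧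
      (∀ q : Fin N × Fin N → ℝ, (∀ ab, 0 ≤ q ab) → (∑ ab, q ab = 1) →
        (∀ a, ∑ b, q (a, b) = p0 a) → (∀ b, ∑ a, q (a, b) = pT b) →
        q ≠ (fun ab => gh ab.1 * p ab * g ab.2) →
        relEnt (fun ab => gh ab.1 * p ab * g ab.2) p < relEnt q p) := by
  obtain ⟨gh, g, hgh, hg, hfst, hsnd, hmin⟩ :=
    schroedinger_bridge_one_step_general p hp p0 pT hp0 hpT (hp0sum.trans hpTsum.symm)
  exact ⟨gh, g, hgh, hg, fun ab ↦ (mul_pos (mul_pos (hgh _) (hp ab)) (hg _)).le,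
    by simp only [Fintype.sum_prod_type, hfst, hp0sum], hfst, hsnd, fun q hq _ ↦ hmin q hq⟩
end

section
/- Let X = {1,…,N}, let T ≥ 1, let Π(t) = [π_{ij}(t)], for t = 0,…,T−1, be N×N stochastic matrices, and let p be a strictly positive probability distribution on X. Define the prior Markov distribution P on X^{T+1} by P(x_0,…,x_T) = p(x_0)·∏_{t=0}^{T−1} π_{x_t,x_{t+1}}(t), and assume the T-step transition matrix Π(0)Π(1)⋯Π(T−1) has all entries strictly positive. Let p_0, p_T be probability distributions on X and suppose there exist strictly positive functions φ(t,·), φ̂(t,·) on {0,…,T}×X satisfying, for t = 0,…,T−1, φ(t,i) = Σ_j π_{ij}(t)·φ(t+1,j) and φ̂(t+1,j) = Σ_i π_{ij}(t)·φ̂(t,i), with boundary conditions φ(0,i)·φ̂(0,i) = p_0(i) and φ(T,j)·φ̂(T,j) = p_T(j) for all i, j. Then the matrices Π°(t) with entries π°_{ij}(t) = π_{ij}(t)·φ(t+1,j)/φ(t,i) are stochastic, the Markov distribution Q°(x_0,…,x_T) = p_0(x_0)·∏_{t=0}^{T−1} π°_{x_t,x_{t+1}}(t) has time-0 marginal p_0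 and time-T marginal p_T, and Q° is the unique minimizer of D(Q‖P) over all probability distributions Q on X^{T+1} whose time-0 marginal is p_0 and whose time-T marginal is p_T. -/
/-!
Write `φ` for `f` and `φ̂` for `g`. The products in `Q°` telescope, so that
`Q°(x) = P(x) · (φ̂(0, x_0) / p(x_0)) · φ(T, x_T)`: the density of `Q°` with respect to `P` is a
product of a function of the initial state and a function of the final state. Consequently
`D(Q‖P) - D(Q‖Q°) = Σ_x Q(x) log (Q°(x) / P(x))` depends on `Q` only through its two end marginals,
and minimizing `D(Q‖P)` amounts to minimizing `D(Q‖Q°)`, which Gibbs' inequality settles.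
-/

open scoped BigOperators

/-- The relative entropy `D(Q‖P)` of probability distributions on a finite set, with values in
`EReal`: it equals `Σ_s Q(s)·log(Q(s)/P(s))` (convention `0·log 0 = 0`) when
`Supp(Q) ⊆ Supp(P)`, and `+∞` otherwise. -/
noncomputable def relEntE {α : Type*} [Fintype α] (Q P : α → ℝ) : EReal :=
  open scoped Classical in
  if ∀ s, P s = 0 → Q s = 0 then ((∑ s, Q s * Real.log (Q s / P s) : ℝ) : EReal) else ⊤

section RelativeEntropy

theorem sub_lt_mul_log_div {q r : ℝ} (hq : 0 ≤ q) (hr : 0 < r) (hne : q ≠ r) :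
    q - r < q * Real.log (q / r) := by
  have hklFun : 0 < InformationTheory.klFun (q / r) := by
    refine (InformationTheory.klFun_nonneg (by positivity)).lt_of_ne' fun h => hne ?_
    exact (div_eq_one_iff_eq hr.ne').1 ((InformationTheory.klFun_eq_zero_iff (by positivity)).1 h)
  have hmul : r * InformationTheory.klFun (q / r) = q * Real.log (q / r) - (q - r) := by
    rw [InformationTheory.klFun_apply]
    field_simp
    ring
  linarith [mul_pos hr hklFun]

theorem mul_log_div_self (r : ℝ) : r * Real.log (r / r) = 0 := by
  rcases eq_or_ne r 0 with rfl | hr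
  · simp
  · simp [div_self hr]

variable {α : Type*} [Fintype α]

theorem sum_mul_log_div_pos {Q R : α → ℝ} (hQ : ∀ s, 0 ≤ Q s) (hR : ∀ s, 0 ≤ R s)
    (hac : ∀ s, R s = 0 → Q s = 0) (hsum : ∑ s, Q s = ∑ s, R s) (hne : Q ≠ R) :
    0 < ∑ s, Q s * Real.log (Q s / R s) := by
  have hlt (s) (hs : Q s ≠ R s) : Q s - R s < Q s * Real.log (Q s / R s) :=
    sub_lt_mul_log_div (hQ s) ((hR s).lt_of_ne' fun h => hs ((hac s h).trans h.symm)) hs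
  have hle (s) : Q s - R s ≤ Q s * Real.log (Q s / R s) := by
    by_cases hs : Q s = R s
    · rw [hs, mul_log_div_self, sub_self]
    · exact (hlt s hs).le
  obtain ⟨s, hs⟩ := Function.ne_iff.1 hne
  calc 0 = ∑ s, (Q s - R s) := by rw [Finset.sum_sub_distrib, hsum, sub_self]
    _ < ∑ s, Q s * Real.log (Q s / R s) :=
      Finset.sum_lt_sum (fun s _ => hle s) ⟨s, Finset.mem_univ s, hlt s hs⟩

theorem sum_mul_log_div_eq_add {Q P w : α → ℝ} (hP : ∀ s, P s = 0 → Q s = 0)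
    (hw : ∀ s, w s = 0 → Q s = 0) :
    ∑ s, Q s * Real.log (Q s / P s) =
      ∑ s, Q s * Real.log (Q s / (P s * w s)) + ∑ s, Q s * Real.log (w s) := by
  rw [← Finset.sum_add_distrib]
  refine Finset.sum_congr rfl fun s _ => ?_
  by_cases hs : Q s = 0
  · simp [hs]
  have hPs : P s ≠ 0 := mt (hP s) hs
  have hws : w s ≠ 0 := mt (hw s) hs
  rw [← mul_add, ← Real.log_mul (div_ne_zero hs (mul_ne_zero hPs hws)) hws]
  congr 2
  field_simp

theorem relEntE_of_absolutelyContinuous {Q P : α → ℝ} (h : ∀ s, P s = 0 → Q s = 0) :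
    relEntE Q P = ((∑ s, Q s * Real.log (Q s / P s) : ℝ) : EReal) :=
  if_pos h

theorem relEntE_mul_lt {Q P w : α → ℝ} (hP : ∀ s, 0 ≤ P s) (hw : ∀ s, 0 ≤ w s) (hQ : ∀ s, 0 ≤ Q s)
    (hsupp : ∀ s, w s = 0 → Q s = 0) (hsum : ∑ s, Q s = ∑ s, P s * w s)
    (hlog : ∑ s, Q s * Real.log (w s) = ∑ s, P s * w s * Real.log (w s))
    (hne : Q ≠ fun s => P s * w s) :
    relEntE (fun s => P s * w s) P < relEntE Q P := by
  have hac (s) (hs : P s = 0) : P s * w s = 0 := by rw [hs, zero_mul]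
  have hwzero (s) (hs : w s = 0) : P s * w s = 0 := by rw [hs, mul_zero]
  rw [relEntE_of_absolutelyContinuous hac]
  by_cases hQP : ∀ s, P s = 0 → Q s = 0
  · have hgibbs : 0 < ∑ s, Q s * Real.log (Q s / (P s * w s)) :=
      sum_mul_log_div_pos hQ (fun s => mul_nonneg (hP s) (hw s))
        (fun s hs => (mul_eq_zero.1 hs).elim (hQP s) (hsupp s)) hsum hne
    rw [relEntE_of_absolutelyContinuous hQP, EReal.coe_lt_coe_iff,
      sum_mul_log_div_eq_add hQP hsupp,
      sum_mul_log_div_eq_add hac hwzero, hlog]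
    simpa only [mul_log_div_self, Finset.sum_const_zero, zero_add, lt_add_iff_pos_left]
  · rw [relEntE, if_neg hQP]
    exact EReal.coe_lt_top _

end RelativeEntropy

section Marginals

variable {α β γ : Type*} [Fintype α]

theorem sum_mul_comp_eq_of_sum_fiber_eq [DecidableEq β] {Q R : α → ℝ} {e : α → β}
    (h : ∀ b, ∑ x with e x = b, Q x = ∑ x with e x = b, R x) (c : β → ℝ) :
    ∑ x, Q x * c (e x) = ∑ x, R x * c (e x) := by
  have hfiber (W : α → ℝ) : ∑ x, W x * c (e x) =
      ∑ b ∈ Finset.univ.image e, (∑ x with e x = b, W x) * c b := by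
    rw [← Finset.sum_fiberwise_of_maps_to fun x hx => Finset.mem_image_of_mem e hx]
    refine Finset.sum_congr rfl fun b _ => ?_
    rw [Finset.sum_mul]
    exact Finset.sum_congr rfl fun x hx => by rw [(Finset.mem_filter.1 hx).2]
  simp only [hfiber, h]

theorem eq_zero_of_sum_fiber_eq [DecidableEq β] {Q R : α → ℝ} {e : α → β} {u : β → ℝ}
    (hQ : ∀ x, 0 ≤ Q x) (h : ∀ b, ∑ x with e x = b, Q x = ∑ x with e x = b, R x)
    (hR : ∀ x, u (e x) = 0 → R x = 0) {x : α} (hx : u (e x) = 0) : Q x = 0 := by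
  have hfiber : ∑ y with e y = e x, Q y = 0 := by
    rw [h]
    refine Finset.sum_eq_zero fun y hy => hR y ?_
    rwa [(Finset.mem_filter.1 hy).2]
  exact (Finset.sum_eq_zero_iff_of_nonneg fun y _ => hQ y).1 hfiber x (by simp)

theorem sum_mul_log_mul {W a b : α → ℝ} (ha : ∀ x, a x = 0 → W x = 0)
    (hb : ∀ x, b x = 0 → W x = 0) :
    ∑ x, W x * Real.log (a x * b x) = ∑ x, W x * Real.log (a x) + ∑ x, W x * Real.log (b x) := by
  rw [← Finset.sum_add_distrib]
  refine Finset.sum_congr rfl fun x _ => ?_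
  by_cases hx : W x = 0
  · simp [hx]
  · rw [Real.log_mul (mt (ha x) hx) (mt (hb x) hx), mul_add]

theorem relEntE_lt_of_sum_fiber_eq [DecidableEq β] [DecidableEq γ]
    {P Q R : α → ℝ} {e : α → β} {e' : α → γ} {u : β → ℝ} {v : γ → ℝ}
    (hP : ∀ x, 0 ≤ P x) (hu : ∀ b, 0 ≤ u b) (hv : ∀ c, 0 ≤ v c)
    (hR : ∀ x, R x = P x * (u (e x) * v (e' x))) (hQ : ∀ x, 0 ≤ Q x)
    (he : ∀ b, ∑ x with e x = b, Q x = ∑ x with e x = b, R x)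
    (he' : ∀ c, ∑ x with e' x = c, Q x = ∑ x with e' x = c, R x) (hne : Q ≠ R) :
    relEntE R P < relEntE Q P := by
  have hRu (x) (hx : u (e x) = 0) : R x = 0 := by rw [hR, hx, zero_mul, mul_zero]
  have hRv (x) (hx : v (e' x) = 0) : R x = 0 := by rw [hR, hx, mul_zero, mul_zero]
  have hQu (x) : u (e x) = 0 → Q x = 0 := eq_zero_of_sum_fiber_eq hQ he hRu
  have hQv (x) : v (e' x) = 0 → Q x = 0 := eq_zero_of_sum_fiber_eq hQ he' hRv
  have hlog : ∑ x, Q x * Real.log (u (e x) * v (e' x)) =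
      ∑ x, R x * Real.log (u (e x) * v (e' x)) := by
    rw [sum_mul_log_mul hQu hQv, sum_mul_log_mul hRu hRv,
      sum_mul_comp_eq_of_sum_fiber_eq he fun b => Real.log (u b),
      sum_mul_comp_eq_of_sum_fiber_eq he' fun c => Real.log (v c)]
  have hsum : ∑ x, Q x = ∑ x, R x := by
    simpa only [mul_one] using sum_mul_comp_eq_of_sum_fiber_eq he fun _ => 1
  obtain rfl : R = fun x => P x * (u (e x) * v (e' x)) := funext hR
  exact relEntE_mul_lt hP (fun x => mul_nonneg (hu _) (hv _)) hQ
    (fun x hx => (mul_eq_zero.1 hx).elim (hQu x) (hQv x)) hsum hlog hne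

end Marginals

open scoped Matrix

section PathWeight

variable {S R : Type*} {T : ℕ}

/-- The product of the one-step weights `K t (x t) (x (t + 1))` along a path `x`; for stochastic
matrices `K t` this is the conditional probability of the path given its initial state. -/
def pathWeight [CommMonoid R] (K : Fin T → Matrix S S R) (x : Fin (T + 1) → S) : R :=
  ∏ t, K t (x t.castSucc) (x t.succ)

theorem pathWeight_cons [CommMonoid R] (K : Fin (T + 1) → Matrix S S R) (i : S)
    (x : Fin (T + 1) → S) :
    pathWeight K (Fin.cons i x : Fin (T + 2) → S) =
      K 0 i (x 0) * pathWeight (fun t => K t.succ) x := by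
  simp only [pathWeight, Fin.prod_univ_succ, Fin.castSucc_zero, Fin.cons_zero, Fin.cons_succ,
    ← Fin.succ_castSucc]

variable [Fintype S] [DecidableEq S]

theorem eq_prod_ofFn_mulVec [Semiring R] (K : Fin T → Matrix S S R) (h : Fin (T + 1) → S → R)
    (hh : ∀ t, h t.castSucc = K t *ᵥ h t.succ) :
    h 0 = (List.ofFn K).prod *ᵥ h (Fin.last T) := by
  induction T with
  | zero => simp
  | succ T ih =>
    rw [List.ofFn_succ, List.prod_cons, ← Matrix.mulVec_mulVec, ← Fin.succ_last,
      ← ih (fun t => K t.succ) (fun t => h t.succ) fun t => hh t.succ]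
    exact hh 0

theorem eq_vecMul_prod_ofFn [Semiring R] (K : Fin T → Matrix S S R) (g : Fin (T + 1) → S → R)
    (hg : ∀ t, g t.succ = g t.castSucc ᵥ* K t) :
    g (Fin.last T) = g 0 ᵥ* (List.ofFn K).prod := by
  induction T with
  | zero => simp
  | succ T ih =>
    rw [List.ofFn_succ, List.prod_cons, ← Matrix.vecMul_vecMul, ← Fin.succ_last,
      ih (fun t => K t.succ) (fun t => g t.succ) fun t => hg t.succ]
    exact congrArg (· ᵥ* _) (hg 0)

variable [CommSemiring R]

theorem sum_mul_pathWeight_mul (K : Fin T → Matrix S S R) (a b : S → R) :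
    ∑ x, a (x 0) * pathWeight K x * b (x (Fin.last T)) =
      a ⬝ᵥ ((List.ofFn K).prod *ᵥ b) := by
  induction T generalizing a with
  | zero =>
    rw [← (Equiv.funUnique (Fin 1) S).symm.sum_comp]
    simp [pathWeight, dotProduct]
  | succ T ih =>
    calc ∑ x, a (x 0) * pathWeight K x * b (x (Fin.last (T + 1)))
        = ∑ y : Fin (T + 1) → S, ∑ i,
            a i * (K 0 i (y 0) * pathWeight (fun t => K t.succ) y) * b (y (Fin.last T)) := by
          rw [← (Fin.consEquiv fun _ : Fin (T + 2) => S).sum_comp, Fintype.sum_prod_type,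
            Finset.sum_comm]
          simp only [Fin.consEquiv, Equiv.coe_fn_mk, pathWeight_cons, Fin.cons_zero,
            Fin.cons_succ, ← Fin.succ_last]
      _ = ∑ y : Fin (T + 1) → S,
            (a ᵥ* K 0) (y 0) * pathWeight (fun t => K t.succ) y * b (y (Fin.last T)) := by
          simp only [Matrix.vecMul, dotProduct, Finset.sum_mul, mul_assoc]
      _ = a ⬝ᵥ ((List.ofFn K).prod *ᵥ b) := by
          rw [ih, ← Matrix.dotProduct_mulVec, Matrix.mulVec_mulVec, List.ofFn_succ, List.prod_cons]

theorem sum_pathWeight_mul_of_head_eq (K : Fin T → Matrix S S R) (b : S → R) (i : S) :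
    ∑ x with x 0 = i, pathWeight K x * b (x (Fin.last T)) = ((List.ofFn K).prod *ᵥ b) i := by
  simpa [Finset.sum_filter, Pi.single_apply] using sum_mul_pathWeight_mul K (Pi.single i 1) b

theorem sum_mul_pathWeight_of_last_eq (K : Fin T → Matrix S S R) (a : S → R) (j : S) :
    ∑ x with x (Fin.last T) = j, a (x 0) * pathWeight K x = (a ᵥ* (List.ofFn K).prod) j := by
  simpa [Finset.sum_filter, Pi.single_apply, Matrix.col, dotProduct, Matrix.vecMul] using
    sum_mul_pathWeight_mul K a (Pi.single j 1)

end PathWeight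

section DoobTransform

variable {S F : Type*} {T : ℕ} [Field F]

/-- Doob's `h`-transform of a family of transition matrices `K` by a space-time function `h`: the
transition matrices of the path law obtained by tilting with the weight `h` at the final time.
Where `h t.castSucc` vanishes the entries are `0`, by the convention for division by zero. -/
def doobTransform (K : Fin T → Matrix S S F) (h : Fin (T + 1) → S → F) (t : Fin T) :
    Matrix S S F :=
  Matrix.of fun i j => K t i j * h t.succ j / h t.castSucc i

theorem doobTransform_mem_rowStochastic [LinearOrder F] [IsStrictOrderedRing F] [Fintype S]
    [DecidableEq S] {K : Fin T → Matrix S S F} {h : Fin (T + 1) → S → F} {t : Fin T}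
    (hK : ∀ i j, 0 ≤ K t i j) (hpos : ∀ i, 0 < h t.castSucc i) (hnonneg : ∀ j, 0 ≤ h t.succ j)
    (hh : h t.castSucc = K t *ᵥ h t.succ) :
    doobTransform K h t ∈ Matrix.rowStochastic F S := by
  refine Matrix.mem_rowStochastic_iff_sum.2 ⟨fun i j => ?_, fun i => ?_⟩
  · exact div_nonneg (mul_nonneg (hK i j) (hnonneg j)) (hpos i).le
  · calc ∑ j, K t i j * h t.succ j / h t.castSucc i
        = (K t *ᵥ h t.succ) i / h t.castSucc i := (Finset.sum_div ..).symm
      _ = 1 := by rw [← hh, div_self (hpos i).ne']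

theorem mul_prod_succ_div_castSucc {h : Fin (T + 1) → F} (hh : ∀ t : Fin T, h t.castSucc ≠ 0) :
    h 0 * ∏ t : Fin T, h t.succ / h t.castSucc = h (Fin.last T) := by
  have hprod : ∏ t : Fin T, h t.castSucc ≠ 0 := Finset.prod_ne_zero_iff.2 fun t _ => hh t
  rw [Finset.prod_div_distrib, ← mul_div_assoc, ← Fin.prod_univ_succ, Fin.prod_univ_castSucc,
    mul_div_cancel_left₀ _ hprod]

theorem mul_pathWeight_doobTransform (K : Fin T → Matrix S S F) {h : Fin (T + 1) → S → F}
    (hh : ∀ (t : Fin T) i, h t.castSucc i ≠ 0) (x : Fin (T + 1) → S) :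
    h 0 (x 0) * pathWeight (doobTransform K h) x =
      pathWeight K x * h (Fin.last T) (x (Fin.last T)) := by
  simp only [pathWeight, doobTransform, Matrix.of_apply, mul_div_assoc, Finset.prod_mul_distrib]
  rw [mul_left_comm, mul_prod_succ_div_castSucc (h := fun t => h t (x t)) fun t => hh t _]

end DoobTransform

theorem schroedinger_bridge_markov_general {S : Type*} [Fintype S] [DecidableEq S] {T : ℕ}
    (K : Fin T → Matrix S S ℝ) (hK : ∀ t i j, 0 ≤ K t i j)
    {p p0 pT : S → ℝ} (hp : ∀ i, 0 ≤ p i) {f g : Fin (T + 1) → S → ℝ}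
    (hfpos : ∀ (t : Fin T) i, 0 < f t.castSucc i) (hfT : ∀ j, 0 ≤ f (Fin.last T) j)
    (hg : ∀ i, 0 ≤ g 0 i) (hgp : ∀ i, p i = 0 → g 0 i = 0)
    (hfrec : ∀ t, f t.castSucc = K t *ᵥ f t.succ) (hgrec : ∀ t, g t.succ = g t.castSucc ᵥ* K t)
    (hb0 : ∀ i, f 0 i * g 0 i = p0 i) (hbT : ∀ j, f (Fin.last T) j * g (Fin.last T) j = pT j)
    {P Qo : (Fin (T + 1) → S) → ℝ} (hP : ∀ x, P x = p (x 0) * pathWeight K x)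
    (hQo : ∀ x, Qo x = p0 (x 0) * pathWeight (doobTransform K f) x) :
    (∀ t, doobTransform K f t ∈ Matrix.rowStochastic ℝ S) ∧
    (∀ i, ∑ x with x 0 = i, Qo x = p0 i) ∧
    (∀ j, ∑ x with x (Fin.last T) = j, Qo x = pT j) ∧
    ∀ Q : (Fin (T + 1) → S) → ℝ, (∀ x, 0 ≤ Q x) →
      (∀ i, ∑ x with x 0 = i, Q x = p0 i) → (∀ j, ∑ x with x (Fin.last T) = j, Q x = pT j) →
      Q ≠ Qo → relEntE Qo P < relEntE Q P := by
  have hfnonneg (t) : ∀ j, 0 ≤ f t j := t.lastCases hfT fun t j => (hfpos t j).le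
  have hweight (x) : Qo x = g 0 (x 0) * pathWeight K x * f (Fin.last T) (x (Fin.last T)) := by
    rw [hQo, ← hb0, mul_comm (f 0 _), mul_assoc,
      mul_pathWeight_doobTransform K fun t i => (hfpos t i).ne', mul_assoc]
  have hhead (i) : ∑ x with x 0 = i, Qo x = p0 i := by
    rw [← hb0, eq_prod_ofFn_mulVec K f hfrec, ← sum_pathWeight_mul_of_head_eq, Finset.sum_mul]
    refine Finset.sum_congr rfl fun x hx => ?_
    rw [hweight, (Finset.mem_filter.1 hx).2]
    ring
  have hlast (j) : ∑ x with x (Fin.last T) = j, Qo x = pT j := by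
    rw [← hbT, eq_vecMul_prod_ofFn K g hgrec, ← sum_mul_pathWeight_of_last_eq, Finset.mul_sum]
    refine Finset.sum_congr rfl fun x hx => ?_
    rw [hweight, (Finset.mem_filter.1 hx).2]
    ring
  have hdensity (x) : Qo x = P x * (g 0 (x 0) / p (x 0) * f (Fin.last T) (x (Fin.last T))) := by
    have hcancel : p (x 0) * (g 0 (x 0) / p (x 0)) = g 0 (x 0) := mul_div_cancel_of_imp' (hgp _)
    rw [hweight, hP]
    linear_combination -(pathWeight K x * f (Fin.last T) (x (Fin.last T))) * hcancel
  refine ⟨fun t => doobTransform_mem_rowStochastic (hK t) (hfpos t) (hfnonneg _) (hfrec t),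
    hhead, hlast, fun Q hQ hQ0 hQT hne => ?_⟩
  have hPnonneg (x) : 0 ≤ P x := by
    rw [hP]
    exact mul_nonneg (hp _) (Finset.prod_nonneg fun t _ => hK t _ _)
  exact relEntE_lt_of_sum_fiber_eq (u := fun i => g 0 i / p i) hPnonneg
    (fun i => div_nonneg (hg i) (hp i)) hfT hdensity hQ (fun i => (hQ0 i).trans (hhead i).symm)
    (fun j => (hQT j).trans (hlast j).symm) hne

/-- Schrödinger bridge for a Markov chain prior: given stochastic matrices `Π(t)`, a strictly
positive initial distribution `p`, a prior Markov law `P` on paths, a strictly positive T-step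
transition matrix, and strictly positive space-time harmonic functions `φ`, `φ̂` solving the
Schrödinger system with boundary conditions given by `p_0`, `p_T`, then the twisted transition
matrices `π°_{ij}(t) = π_{ij}(t)·φ(t+1,j)/φ(t,i)` are stochastic, the Markov law `Q°` built from
them with initial distribution `p_0` has marginals `p_0` and `p_T` at times `0` and `T`, and `Q°`
is the unique minimizer of `D(Q‖P)` over probability laws with those marginals. -/
theorem schroedinger_bridge_markov {N T : ℕ} [NeZero N] (hT : 1 ≤ T)
    (Pm : Fin T → Matrix (Fin N) (Fin N) ℝ)
    (hnn : ∀ t i j, 0 ≤ Pm t i j) (hrow : ∀ t i, ∑ j, Pm t i j = 1)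
    (p : Fin N → ℝ) (hp : ∀ i, 0 < p i) (hpsum : ∑ i, p i = 1)
    (Pprior : (Fin (T + 1) → Fin N) → ℝ)
    (hPdef : ∀ x, Pprior x = p (x 0) * ∏ t : Fin T, Pm t (x t.castSucc) (x t.succ))
    (hprod : ∀ i j, 0 < (List.ofFn Pm).prod i j)
    (p0 pT : Fin N → ℝ)
    (hp0nn : ∀ i, 0 ≤ p0 i) (hp0sum : ∑ i, p0 i = 1)
    (hpTnn : ∀ j, 0 ≤ pT j) (hpTsum : ∑ j, pT j = 1)
    (f g : Fin (T + 1) → Fin N → ℝ)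
    (hf : ∀ t i, 0 < f t i) (hg : ∀ t i, 0 < g t i)
    (hfrec : ∀ (t : Fin T) (i : Fin N), f t.castSucc i = ∑ j, Pm t i j * f t.succ j)
    (hgrec : ∀ (t : Fin T) (j : Fin N), g t.succ j = ∑ i, Pm t i j * g t.castSucc i)
    (hb0 : ∀ i, f 0 i * g 0 i = p0 i)
    (hbT : ∀ j, f (Fin.last T) j * g (Fin.last T) j = pT j)
    (Qo : (Fin (T + 1) → Fin N) → ℝ)
    (hQdef : ∀ x, Qo x = p0 (x 0) *
      ∏ t : Fin T, (Pm t (x t.castSucc) (x t.succ) * f t.succ (x t.succ) /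
        f t.castSucc (x t.castSucc))) :
    (∀ t : Fin T,
      (∀ i j, 0 ≤ Pm t i j * f t.succ j / f t.castSucc i) ∧
      (∀ i, ∑ j, Pm t i j * f t.succ j / f t.castSucc i = 1)) ∧
    (∀ i, ∑ x ∈ Finset.univ.filter (fun x : Fin (T + 1) → Fin N => x 0 = i), Qo x = p0 i) ∧
    (∀ j, ∑ x ∈ Finset.univ.filter (fun x : Fin (T + 1) → Fin N => x (Fin.last T) = j), Qo x
        = pT j) ∧
    (∀ Q : (Fin (T + 1) → Fin N) → ℝ, (∀ x, 0 ≤ Q x) → (∑ x, Q x = 1) →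
      (∀ i, ∑ x ∈ Finset.univ.filter (fun x : Fin (T + 1) → Fin N => x 0 = i), Q x = p0 i) →
      (∀ j, ∑ x ∈ Finset.univ.filter
          (fun x : Fin (T + 1) → Fin N => x (Fin.last T) = j), Q x = pT j) →
      Q ≠ Qo → relEntE Qo Pprior < relEntE Q Pprior) := by
  obtain ⟨hstoch, hhead, hlast, hmin⟩ := schroedinger_bridge_markov_general Pm hnn
    (fun i => (hp i).le) (fun t => hf t.castSucc) (fun j => (hf _ j).le) (fun i => (hg 0 i).le)
    (fun i hi => absurd hi (hp i).ne') (fun t => funext (hfrec t))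
    (fun t => (funext (hgrec t)).trans (Matrix.mulVec_transpose (Pm t) _)) hb0 hbT hPdef hQdef
  exact ⟨fun t => Matrix.mem_rowStochastic_iff_sum.1 (hstoch t), hhead, hlast,
    fun Q hQ _ => hmin Q hQ⟩
end

section
/- Let E_1,…,E_m be n×n complex matrices with Σ_{i=1}^m E_i† E_i = I, and suppose the Kraus map ρ ↦ Σ_{i=1}^m E_i ρ E_i† is positivity improving. Let E denote its adjoint, E(X) = Σ_{i=1}^m E_i† X E_i (so E(I) = I). Then E maps Hermitian positive definite matrices to Hermitian positive definite matrices and its projective diameter is finite: sup{d_H(E(X), E(Y)) : X, Y n×n Hermitian positive definite} < ∞. -/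
open Matrix
open scoped ComplexOrder

/-- The Hilbert projective metric on Hermitian positive definite `n×n` complex matrices:
`d_H(X,Y) = log(M(X,Y)/m(X,Y))` with `M(X,Y) = inf{λ : λY − X ⪰ 0}` and
`m(X,Y) = sup{λ : X − λY ⪰ 0}`. -/
noncomputable def dHmat {n : ℕ} (X Y : Matrix (Fin n) (Fin n) ℂ) : ℝ :=
  Real.log (sInf {l : ℝ | ((l : ℂ) • Y - X).PosSemidef} /
    sSup {l : ℝ | (X - (l : ℂ) • Y).PosSemidef})

/-!
Duality makes the adjoint `Φ` positivity improving as well: if `Ψ` is the Kraus map, then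
`⟨v, Φ(X) v⟩ = tr (X Ψ(v v†))`, the trace of a product of a nonzero positive semidefinite matrix and
a positive definite one.

A positivity improving linear map `Φ` pinches all of its values between multiples of `Φ(1)`,
`c tr(X) Φ(1) ≤ Φ(X) ≤ tr(X) Φ(1)`, with `c > 0` independent of `X`. The upper bound is `Φ`
applied to `X ≤ tr(X) 1`. For the lower one, `(B, v) ↦ ⟨v, Φ(B†B) v⟩` is positive on the compact
product of the unit spheres for the Frobenius and the Euclidean norm, hence bounded below there by
a positive constant, and `‖B‖² = tr(B†B)`. Any two values of `Φ` at nonzero positive semidefinite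
matrices are therefore at projective distance at most `log (1 / c²)`.
-/

open RCLike
open scoped MatrixOrder

section Bihomogeneous

variable {V W : Type*} [NormedAddCommGroup V] [NormedSpace ℝ V] [ProperSpace V]
  [NormedAddCommGroup W] [NormedSpace ℝ W] [ProperSpace W]

lemma exists_pos_mul_norm_pow_le_of_bihomogeneous {f : V → W → ℝ} {p q : ℕ} (hp : p ≠ 0)
    (hq : q ≠ 0) (hcont : Continuous fun z : V × W ↦ f z.1 z.2)
    (hpos : ∀ x y, x ≠ 0 → y ≠ 0 → 0 < f x y)
    (hsmul : ∀ (s t : ℝ) x y, f (s • x) (t • y) = s ^ p * t ^ q * f x y) :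
    ∃ c > 0, ∀ x y, c * ‖x‖ ^ p * ‖y‖ ^ q ≤ f x y := by
  obtain ⟨c, hc, hmin⟩ :=
    ((isCompact_sphere (0 : V) 1).prod (isCompact_sphere (0 : W) 1)).exists_forall_le'
      hcont.continuousOn fun z hz ↦
        hpos z.1 z.2 (ne_zero_of_mem_unit_sphere ⟨z.1, hz.1⟩)
          (ne_zero_of_mem_unit_sphere ⟨z.2, hz.2⟩)
  refine ⟨c, hc, fun x y ↦ ?_⟩
  rcases eq_or_ne x 0 with rfl | hx
  · simpa [hp] using (hsmul 0 1 0 y).ge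
  rcases eq_or_ne y 0 with rfl | hy
  · simpa [hq] using (hsmul 1 0 x 0).ge
  calc c * ‖x‖ ^ p * ‖y‖ ^ q = ‖x‖ ^ p * ‖y‖ ^ q * c := by ring
    _ ≤ ‖x‖ ^ p * ‖y‖ ^ q * f (‖x‖⁻¹ • x) (‖y‖⁻¹ • y) := by
      gcongr
      exact hmin (‖x‖⁻¹ • x, ‖y‖⁻¹ • y) (by simp [norm_smul, hx, hy])
    _ = f x y := by
      rw [← hsmul, smul_inv_smul₀ (norm_ne_zero_iff.2 hx), smul_inv_smul₀ (norm_ne_zero_iff.2 hy)]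

end Bihomogeneous

section Loewner

variable {𝕜 n : Type*} [RCLike 𝕜] [Fintype n] {A X : Matrix n n 𝕜} {r : ℝ}

lemma re_trace_nonneg (hA : A.PosSemidef) : 0 ≤ re A.trace := (nonneg_iff.1 hA.trace_nonneg).1

lemma re_trace_pos (hA : A.PosSemidef) (hA0 : A ≠ 0) : 0 < re A.trace :=
  (pos_iff.1 (hA.trace_nonneg.lt_of_ne' (mt hA.trace_eq_zero_iff.1 hA0))).1

lemma trace_mul_pos (hX : X.PosSemidef) (hX0 : X ≠ 0) (hA : A.PosDef) : 0 < (X * A).trace := by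
  classical
  obtain ⟨C, hC, rfl⟩ :=
    CStarAlgebra.isStrictlyPositive_iff_eq_star_mul_self.1 (isStrictlyPositive_iff_posDef.2 hA)
  rw [← mul_assoc, trace_mul_cycle, star_eq_conjTranspose]
  have hCX := hX.mul_mul_conjTranspose_same C
  refine hCX.trace_nonneg.lt_of_ne' (mt hCX.trace_eq_zero_iff.1 fun h ↦ hX0 ?_)
  rwa [← star_eq_conjTranspose, hC.star.mul_left_eq_zero, hC.mul_right_eq_zero] at h

variable [DecidableEq n]

lemma smul_one_le_iff_le_eigenvalues (hA : A.IsHermitian) :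
    r • 1 ≤ A ↔ ∀ i, r ≤ hA.eigenvalues i := by
  rw [← Algebra.algebraMap_eq_smul_one, algebraMap_le_iff_le_spectrum hA,
    hA.spectrum_real_eq_range_eigenvalues, Set.forall_mem_range]

lemma le_smul_one_iff_eigenvalues_le (hA : A.IsHermitian) :
    A ≤ r • 1 ↔ ∀ i, hA.eigenvalues i ≤ r := by
  rw [← Algebra.algebraMap_eq_smul_one, le_algebraMap_iff_spectrum_le hA,
    hA.spectrum_real_eq_range_eigenvalues, Set.forall_mem_range]

lemma smul_one_le_of_forall_le_re_dotProduct (hA : A.IsHermitian)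
    (h : ∀ v : EuclideanSpace 𝕜 n, r * ‖v‖ ^ 2 ≤ re (star v.ofLp ⬝ᵥ (A *ᵥ v.ofLp))) :
    r • 1 ≤ A :=
  (smul_one_le_iff_le_eigenvalues hA).2 fun i ↦ by
    simpa [hA.eigenvalues_eq] using h (hA.eigenvectorBasis i)

lemma le_re_trace_smul_one (hA : A.PosSemidef) : A ≤ re A.trace • 1 := by
  refine (le_smul_one_iff_eigenvalues_le hA.isHermitian).2 fun i ↦ ?_
  simpa [hA.isHermitian.trace_eq_sum_eigenvalues] using
    Finset.single_le_sum (fun j _ ↦ hA.eigenvalues_nonneg j) (Finset.mem_univ i)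

end Loewner

open scoped Matrix.Norms.Frobenius in
lemma frobenius_norm_sq_eq_re_trace {𝕜 m n : Type*} [RCLike 𝕜] [Fintype m] [Fintype n]
    (B : Matrix m n 𝕜) : ‖B‖ ^ 2 = re (Bᴴ * B).trace := by
  rw [frobenius_norm_def, ← Real.sqrt_eq_rpow, Real.sq_sqrt (by positivity), Finset.sum_comm]
  simp [trace, mul_apply, norm_sq_eq_def]

/-- The strict positivity notion called *positivity improving* for maps between matrix algebras:
nonzero positive semidefinite matrices are sent to positive definite ones. -/
def PositivityImproving {𝕜 m n : Type*} [RCLike 𝕜] [Fintype m] [Fintype n]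
    (Φ : Matrix n n 𝕜 → Matrix m m 𝕜) : Prop :=
  ∀ X, X.PosSemidef → X ≠ 0 → (Φ X).PosDef

namespace PositivityImproving

variable {𝕜 m n : Type*} [RCLike 𝕜] [Fintype m] [Fintype n]
  {Φ : Matrix n n 𝕜 →ₗ[𝕜] Matrix m m 𝕜} {X : Matrix n n 𝕜}

lemma map_posSemidef (hΦ : PositivityImproving Φ) (hX : X.PosSemidef) : (Φ X).PosSemidef := by
  rcases eq_or_ne X 0 with rfl | hX0
  · simpa using PosSemidef.zero
  · exact (hΦ X hX hX0).posSemidef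

lemma monotone (hΦ : PositivityImproving Φ) : Monotone Φ := fun X Y hXY ↦ by
  simpa only [le_iff, map_sub] using hΦ.map_posSemidef hXY

lemma map_le_smul_map_one [DecidableEq n] (hΦ : PositivityImproving Φ) (hX : X.PosSemidef) :
    Φ X ≤ re X.trace • Φ 1 := by
  simpa only [LinearMap.map_smul_of_tower] using hΦ.monotone (le_re_trace_smul_one hX)

open scoped Matrix.Norms.Frobenius in
lemma exists_pos_smul_one_le [DecidableEq m] (hΦ : PositivityImproving Φ) :
    ∃ c > 0, ∀ X : Matrix n n 𝕜, X.PosSemidef → (c * re X.trace) • 1 ≤ Φ X := by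
  classical
  have hcont : Continuous Φ := Φ.continuous_of_finiteDimensional
  obtain ⟨c, hc, hle⟩ := exists_pos_mul_norm_pow_le_of_bihomogeneous two_ne_zero two_ne_zero
    (f := fun (B : Matrix n n 𝕜) (v : EuclideanSpace 𝕜 m) ↦
      re (star v.ofLp ⬝ᵥ (Φ (Bᴴ * B) *ᵥ v.ofLp)))
    (by fun_prop)
    (fun B v hB hv ↦ (hΦ _ (posSemidef_conjTranspose_mul_self B)
      (mt conjTranspose_mul_self_eq_zero.1 hB)).re_dotProduct_pos (by simpa using hv))
    (fun s t B v ↦ by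
      simp only [WithLp.ofLp_smul, star_smul, star_trivial, conjTranspose_smul, Matrix.mul_smul,
        Matrix.smul_mul, LinearMap.map_smul_of_tower, mulVec_smul, smul_mulVec, dotProduct_smul,
        smul_dotProduct, smul_re]
      ring)
  refine ⟨c, hc, fun X hX ↦ ?_⟩
  obtain ⟨B, rfl⟩ := CStarAlgebra.nonneg_iff_eq_star_mul_self.1 hX.nonneg
  refine smul_one_le_of_forall_le_re_dotProduct (hΦ.map_posSemidef hX).isHermitian fun v ↦ ?_
  simpa only [frobenius_norm_sq_eq_re_trace, star_eq_conjTranspose] using hle B v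

lemma exists_pos_smul_map_one_le [DecidableEq n] (hΦ : PositivityImproving Φ) :
    ∃ c > 0, ∀ X : Matrix n n 𝕜, X.PosSemidef → (c * re X.trace) • Φ 1 ≤ Φ X := by
  classical
  obtain ⟨c, hc, hle⟩ := hΦ.exists_pos_smul_one_le
  set t := re (Φ 1).trace
  have ht : 0 ≤ t := re_trace_nonneg (hΦ.map_posSemidef .one)
  refine ⟨c / (t + 1), by positivity, fun X hX ↦ ?_⟩
  have htr : 0 ≤ re X.trace := re_trace_nonneg hX
  calc (c / (t + 1) * re X.trace) • Φ 1
      ≤ (c / (t + 1) * re X.trace) • ((t + 1) • (1 : Matrix m m 𝕜)) := by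
        gcongr
        exact (le_re_trace_smul_one (hΦ.map_posSemidef .one)).trans
          (smul_le_smul_of_nonneg_right (by simp [t]) PosSemidef.one.nonneg)
    _ = (c * re X.trace) • 1 := by rw [smul_smul]; congr 1; field_simp
    _ ≤ Φ X := hle X hX

lemma exists_pos_map_le_smul_map (hΦ : PositivityImproving Φ) : ∃ c > 0,
    ∀ X Y : Matrix n n 𝕜, X.PosSemidef → Y.PosSemidef → Y ≠ 0 →
      Φ X ≤ (re X.trace / (c * re Y.trace)) • Φ Y := by
  classical
  obtain ⟨c, hc, hle⟩ := hΦ.exists_pos_smul_map_one_le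
  refine ⟨c, hc, fun X Y hX hY hY0 ↦ ?_⟩
  have hy : 0 < re Y.trace := re_trace_pos hY hY0
  have hx : 0 ≤ re X.trace := re_trace_nonneg hX
  calc Φ X ≤ re X.trace • Φ 1 := hΦ.map_le_smul_map_one hX
    _ = (re X.trace / (c * re Y.trace)) • (c * re Y.trace) • Φ 1 := by
      rw [smul_smul, div_mul_cancel₀ _ (by positivity)]
    _ ≤ (re X.trace / (c * re Y.trace)) • Φ Y := by
      gcongr
      exact hle Y hY

end PositivityImproving

section HilbertMetric

variable {n : ℕ}

lemma dHmat_eq_log_sInf_div_sSup (P Q : Matrix (Fin n) (Fin n) ℂ) :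
    dHmat P Q = Real.log (sInf {l : ℝ | P ≤ l • Q} / sSup {l : ℝ | l • Q ≤ P}) := by
  simp only [dHmat, le_iff, Complex.coe_smul]

lemma dHmat_le_log_mul {P Q : Matrix (Fin n) (Fin n) ℂ} {a b : ℝ} (hQ : 0 < Q) (ha : 0 < a)
    (hPQ : P ≤ b • Q) (hQP : Q ≤ a • P) : dHmat P Q ≤ Real.log (b * a) := by
  have hQP' : a⁻¹ • Q ≤ P := (inv_smul_le_iff_of_pos ha).2 hQP
  have hlower : ∀ l ∈ {l : ℝ | P ≤ l • Q}, a⁻¹ ≤ l := fun l hl ↦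
    le_of_smul_le_smul_right (hQP'.trans hl) hQ
  have hupper : ∀ l ∈ {l : ℝ | l • Q ≤ P}, l ≤ b := fun l hl ↦
    le_of_smul_le_smul_right (hl.trans hPQ) hQ
  have hM_lower : a⁻¹ ≤ sInf {l : ℝ | P ≤ l • Q} := le_csInf ⟨b, hPQ⟩ hlower
  have hM_upper : sInf {l : ℝ | P ≤ l • Q} ≤ b := csInf_le ⟨a⁻¹, hlower⟩ hPQ
  have hm : a⁻¹ ≤ sSup {l : ℝ | l • Q ≤ P} := le_csSup ⟨b, hupper⟩ hQP'
  have ha' : 0 < a⁻¹ := inv_pos.2 ha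
  rw [dHmat_eq_log_sInf_div_sSup, ← div_inv_eq_mul b a]
  exact Real.log_le_log (div_pos (ha'.trans_le hM_lower) (ha'.trans_le hm))
    (div_le_div₀ (ha'.le.trans (hM_lower.trans hM_upper)) hM_upper ha' hm)

lemma PositivityImproving.exists_dHmat_map_le {ι : Type*} [Fintype ι] [NeZero n]
    {Φ : Matrix ι ι ℂ →ₗ[ℂ] Matrix (Fin n) (Fin n) ℂ} (hΦ : PositivityImproving Φ) :
    ∃ B : ℝ, ∀ X Y : Matrix ι ι ℂ, X.PosSemidef → X ≠ 0 → Y.PosSemidef → Y ≠ 0 →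
      dHmat (Φ X) (Φ Y) ≤ B := by
  obtain ⟨c, hc, hle⟩ := hΦ.exists_pos_map_le_smul_map
  refine ⟨Real.log (1 / c ^ 2), fun X Y hX hX0 hY hY0 ↦ ?_⟩
  have hx : 0 < re X.trace := re_trace_pos hX hX0
  have hy : 0 < re Y.trace := re_trace_pos hY hY0
  have hΦY : (Φ Y).PosDef := hΦ Y hY hY0
  calc dHmat (Φ X) (Φ Y)
      ≤ Real.log (re X.trace / (c * re Y.trace) * (re Y.trace / (c * re X.trace))) :=
        dHmat_le_log_mul (hΦY.posSemidef.nonneg.lt_of_ne' hΦY.isUnit.ne_zero) (by positivity)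
          (hle X Y hX hY hY0) (hle Y X hY hX hX0)
    _ = Real.log (1 / c ^ 2) := by congr 1; field_simp

end HilbertMetric

section Kraus

variable {𝕜 κ m n : Type*} [RCLike 𝕜] [Fintype κ] [Fintype n]

/-- The completely positive map with Kraus operators `E`. No normalization is imposed on `E`, so
that the adjoint of `krausMap E` is `krausMap fun i ↦ (E i)ᴴ`. -/
def krausMap (E : κ → Matrix m n 𝕜) : Matrix n n 𝕜 →ₗ[𝕜] Matrix m m 𝕜 where
  toFun ρ := ∑ i, E i * ρ * (E i)ᴴ
  map_add' ρ σ := by simp only [Matrix.mul_add, Matrix.add_mul, Finset.sum_add_distrib]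
  map_smul' a ρ := by
    simp only [Matrix.mul_smul, Matrix.smul_mul, Finset.smul_sum, RingHom.id_apply]

lemma krausMap_apply (E : κ → Matrix m n 𝕜) (ρ : Matrix n n 𝕜) :
    krausMap E ρ = ∑ i, E i * ρ * (E i)ᴴ := rfl

lemma krausMap_conjTranspose_apply (E : κ → Matrix n m 𝕜) (X : Matrix n n 𝕜) :
    krausMap (fun i ↦ (E i)ᴴ) X = ∑ i, (E i)ᴴ * X * E i := by
  simp only [krausMap_apply, conjTranspose_conjTranspose]

lemma krausMap_posSemidef [Finite m] (E : κ → Matrix m n 𝕜) {ρ : Matrix n n 𝕜} (hρ : ρ.PosSemidef) :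
    (krausMap E ρ).PosSemidef :=
  posSemidef_sum _ fun i _ ↦ hρ.mul_mul_conjTranspose_same (E i)

variable [Fintype m]

lemma trace_krausMap_conjTranspose_mul (E : κ → Matrix m n 𝕜) (X : Matrix m m 𝕜)
    (ρ : Matrix n n 𝕜) :
    (krausMap (fun i ↦ (E i)ᴴ) X * ρ).trace = (X * krausMap E ρ).trace := by
  simp only [krausMap_apply, conjTranspose_conjTranspose, Matrix.sum_mul, Matrix.mul_sum,
    trace_sum, Matrix.mul_assoc]
  refine Finset.sum_congr rfl fun i _ ↦ ?_
  rw [trace_mul_comm]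
  simp only [Matrix.mul_assoc]

lemma PositivityImproving.krausMap_conjTranspose {E : κ → Matrix m n 𝕜}
    (hE : PositivityImproving (krausMap E)) :
    PositivityImproving (krausMap fun i ↦ (E i)ᴴ) := by
  intro X hX hX0
  refine .of_dotProduct_mulVec_pos (krausMap_posSemidef _ hX).isHermitian fun v hv ↦ ?_
  have hρ0 : vecMulVec v (star v) ≠ 0 := by simpa [vecMulVec_eq_zero] using hv
  have hρ := hE _ (posSemidef_vecMulVec_self_star v) hρ0
  calc 0 < (X * krausMap E (vecMulVec v (star v))).trace := trace_mul_pos hX hX0 hρ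
    _ = star v ⬝ᵥ (krausMap (fun i ↦ (E i)ᴴ) X *ᵥ v) := by
      rw [← trace_krausMap_conjTranspose_mul, mul_vecMulVec, trace_vecMulVec, dotProduct_comm]

end Kraus

theorem kraus_adjoint_posdef_and_finite_diameter_general {n : ℕ} {κ : Type*} [Fintype κ]
    (E : κ → Matrix (Fin n) (Fin n) ℂ)
    (himp : ∀ ρ : Matrix (Fin n) (Fin n) ℂ, ρ.PosSemidef → ρ ≠ 0 →
      (∑ i, E i * ρ * (E i)ᴴ).PosDef) :
    (∀ X : Matrix (Fin n) (Fin n) ℂ, X.PosDef → (∑ i, (E i)ᴴ * X * E i).PosDef) ∧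
    ∃ B : ℝ, ∀ X Y : Matrix (Fin n) (Fin n) ℂ, X.PosDef → Y.PosDef →
      dHmat (∑ i, (E i)ᴴ * X * E i) (∑ i, (E i)ᴴ * Y * E i) ≤ B := by
  have hadj : PositivityImproving (krausMap fun i ↦ (E i)ᴴ) :=
    PositivityImproving.krausMap_conjTranspose (E := E) himp
  simp only [← krausMap_conjTranspose_apply]
  obtain rfl | hn := eq_zero_or_neZero n
  · exact ⟨fun X hX ↦ by rwa [Subsingleton.elim (krausMap _ X) X], dHmat 0 0, fun X Y _ _ ↦
      (congrArg₂ dHmat (Subsingleton.elim _ _) (Subsingleton.elim _ _)).le⟩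
  have hne : ∀ X : Matrix (Fin n) (Fin n) ℂ, X.PosDef → X ≠ 0 := fun X hX ↦ hX.isUnit.ne_zero
  obtain ⟨B, hB⟩ := hadj.exists_dHmat_map_le
  exact ⟨fun X hX ↦ hadj X hX.posSemidef (hne X hX), B, fun X Y hX hY ↦
    hB X Y hX.posSemidef (hne X hX) hY.posSemidef (hne Y hY)⟩

/-- The adjoint `E(X) = Σ_i E_i† X E_i` of a positivity-improving Kraus map sends Hermitian
positive definite matrices to Hermitian positive definite matrices, and has finite projective
diameter with respect to the Hilbert projective metric. -/
theorem kraus_adjoint_posdef_and_finite_diameter {n m : ℕ}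
    (E : Fin m → Matrix (Fin n) (Fin n) ℂ)
    (hsum : ∑ i, (E i)ᴴ * E i = 1)
    (himp : ∀ ρ : Matrix (Fin n) (Fin n) ℂ, ρ.PosSemidef → ρ ≠ 0 →
      (∑ i, E i * ρ * (E i)ᴴ).PosDef) :
    (∀ X : Matrix (Fin n) (Fin n) ℂ, X.PosDef → (∑ i, (E i)ᴴ * X * E i).PosDef) ∧
    ∃ B : ℝ, ∀ X Y : Matrix (Fin n) (Fin n) ℂ, X.PosDef → Y.PosDef →
      dHmat (∑ i, (E i)ᴴ * X * E i) (∑ i, (E i)ᴴ * Y * E i) ≤ B :=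
  kraus_adjoint_posdef_and_finite_diameter_general E himp
end
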